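/- arXiv:math/0501113 — 3 statements merged into one kernel-verified Lean document; each statement's English description precedes it below -/
import Mathlib

section
/- Let Ω be a bounded open convex set in ℝ² containing the origin in its interior. Assume ∂Ω is C¹ and, in an arclength parametrization, the components of the unit tangent vector are absolutely continuous, so the curvature κ is defined almost everywhere as an L¹ function on ∂Ω. Assume there are a > 0 and γ > 0 with κ(x) ≥ a for almost every x ∈ ∂Ω and ∫_{∂Ω} κ (log(2+κ))^{γ} dσ < ∞. Then there is a constant C such that the Fourier transform of the indicator function of the polar set Ω* satisfies |χ̂_{Ω*}(ξ)| ≤ C (1+|ξ|)^{−1} (log(2+|ξ|))^{−γ} for all ξ ∈ ℝ², where χ̂_{Ω*}(ξ) = ∫_{Ω*} e^{−i⟨x,ξ⟩} dx. -/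
/-!
Write `K = Ω*`, `ξ = Rθ` with `‖θ‖ = 1`, and let `w s` be the length of the slice of `K` by the line
`⟪x, θ⟫ = s`. By Fubini, the Fourier transform of the indicator function of `K` at `ξ` is
`∫ w s e^{-iRs} ds` (`fourierInd_eq_slices`), and `w` is concave on the interval `[α, β]` of
heights of `K` (`sliceLen_midconcave`).

With `h = π/R`, translation by `h` changes the sign of `e^{-iRs}`, so four times this integral is
the integral of `D s e^{-iRs}`, where `D s = 2 w s - w (s - h) - w (s + h)`. Concavity makes `D`
nonnegative away from the ends of `[α, β]`, and `∫ D = 0`; hence `∫ |D|` is controlled by the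
slices within `2h` of the ends. This gives `|χ̂_K(ξ)| ≤ 4 h W`, where `W` bounds those slices
(`norm_fourier_le_of_midconcave`, `norm_fourierInd_le_of_caps`).

To bound `W`, let `p = γ t₀` be the boundary point of `Ω` in direction `θ`. A point `x ∈ K` near
the top satisfies `⟪p, x⟫ ≥ 1 - O(h)` and `⟪γ (t₀ ± τ), x⟫ ≤ 1`, so by the mean value theorem
`|⟪γ' t₀, x⟫| ≤ O(h/τ + ω(τ))`, where `ω` is the modulus of continuity of `γ'`. Since `Ω` contains
a ball around `0`, the tangent `γ' t₀` is uniformly transversal to `θ`, and the slices near the top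
have length `O(h/τ + ω(τ))` (`polar_cap`). Finally the `L log^g L` condition gives
`ω(τ) ≤ 2 (M τ + A log(2 + M)^{-g})` for every `M ≥ 0` (`tangent_modulus`); the choice
`τ = R^{-1/2}`, `M = R^{1/4}` makes everything `O(log(2 + R)^{-g})`.
-/

open MeasureTheory Set
open scoped Pointwise RealInnerProductSpace NNReal ENNReal

noncomputable section

abbrev E2 := EuclideanSpace ℝ (Fin 2)

/-- The embedding of an integer vector into the Euclidean plane. -/
def ek (k : Fin 2 → ℤ) : E2 := (WithLp.equiv 2 (Fin 2 → ℝ)).symm fun i => (k i : ℝ)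

/-- Number of lattice points in a set. -/
def latticeCount (S : Set E2) : ℕ := Nat.card {k : Fin 2 → ℤ | ek k ∈ S}

/-- The lattice rest `E_Ω(t) = card(tΩ ∩ ℤ²) − t²·area(Ω)`. -/
def latticeRest (Ω : Set E2) (t : ℝ) : ℝ :=
  (latticeCount (t • Ω) : ℝ) - t ^ 2 * (volume Ω).toReal

/-- The mean square discrepancy `𝒢_Ω(R,h) = ((1/h)∫_R^{R+h} |E_Ω(t)|² dt)^{1/2}`. -/
def meanSquare (Ω : Set E2) (R h : ℝ) : ℝ :=
  Real.sqrt ((1 / h) * ∫ t in R..(R + h), (latticeRest Ω t) ^ 2)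

/-- The support function `ρ*(ξ) = sup {⟨x,ξ⟩ : x ∈ Ω}`. -/
def suppFn (Ω : Set E2) (ξ : E2) : ℝ := sSup ((fun x => ⟪x, ξ⟫) '' Ω)

/-- `μ(θ,δ)`, the diameter of the cap `𝒞(θ,δ) = {x ∈ ∂Ω : ⟨x,θ⟩ ≥ ρ*(θ) − δ}`. -/
def capDiam (Ω : Set E2) (θ : E2) (δ : ℝ) : ℝ :=
  Metric.diam {x ∈ frontier Ω | suppFn Ω θ - δ ≤ ⟪x, θ⟫}

/-- Curvature bounded below in the generalized sense:
`sup_{θ∈S¹} sup_{δ>0} δ^{-1/2} μ(θ,δ) < ∞`. -/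
def CurvBddBelow (Ω : Set E2) : Prop :=
  ∃ K : ℝ, ∀ θ : E2, ‖θ‖ = 1 → ∀ δ : ℝ, 0 < δ → capDiam Ω θ δ ≤ K * Real.sqrt δ

/-- `γ` is an arclength (unit-speed) parametrization of the `C¹` boundary `∂Ω`, with
period `L`, whose unit tangent vector `γ'` is absolutely continuous with almost-everywhere
derivative `γ''`; the curvature is then `κ = ‖γ''‖`, defined a.e. as an `L¹` function. -/
def BoundaryParam (Ω : Set E2) (γ γ' γ'' : ℝ → E2) (L : ℝ) : Prop :=
  0 < L ∧ (∀ t, HasDerivAt γ (γ' t) t) ∧ Continuous γ' ∧ (∀ t, ‖γ' t‖ = 1) ∧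
    Function.Periodic γ L ∧ γ '' Set.Ico 0 L = frontier Ω ∧ Set.InjOn γ (Set.Ico 0 L) ∧
    (∀ t : ℝ, IntervalIntegrable γ'' volume 0 t) ∧
    (∀ t : ℝ, γ' t = γ' 0 + ∫ s in (0:ℝ)..t, γ'' s)

/-- The polar set `Ω* = {ξ : ρ*(ξ) ≤ 1}`. -/
def polarSet (Ω : Set E2) : Set E2 := {ξ | suppFn Ω ξ ≤ 1}

/-- The Fourier transform `χ̂_S(ξ) = ∫_S e^{−i⟨x,ξ⟩} dx` of the indicator function of `S`. -/
def fourierInd (S : Set E2) (ξ : E2) : ℂ :=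
  ∫ x in S, Complex.exp (-Complex.I * (⟪x, ξ⟫ : ℝ))

/-! ### A one-dimensional oscillatory integral -/

/-- Decay of the Fourier integral of a compactly supported function which is midpoint concave on
its support: since `e^{-iRs}` changes sign under translation by `h = π/R`, only the values of `w`
within `2h` of the endpoints matter. -/
theorem norm_fourier_le_of_midconcave (w : ℝ → ℝ) (α β h R W : ℝ) (hint : Integrable w)
    (hw0 : ∀ s, 0 ≤ w s) (hsupp : ∀ s, s < α ∨ β < s → w s = 0) (hh : 0 < h)
    (hRh : R * h = Real.pi) (hW : 0 ≤ W)
    (hcap : ∀ s, s ≤ α + 2 * h ∨ β - 2 * h ≤ s → w s ≤ W)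
    (hmid : ∀ s, α ≤ s - h → s + h ≤ β → w (s - h) + w (s + h) ≤ 2 * w s) :
    ‖∫ s, (w s : ℂ) * Complex.exp (-Complex.I * ((R * s : ℝ) : ℂ))‖ ≤ 4 * h * W := by
  set e : ℝ → ℂ := fun s => Complex.exp (-Complex.I * ((R * s : ℝ) : ℂ)) with he
  have hen : ∀ s, ‖e s‖ = 1 := by
    intro s
    simp [he, Complex.norm_exp]
  have hec : Continuous e := by
    simp only [he]; fun_prop
  have hI : ∀ v : ℝ → ℝ, Integrable v → Integrable (fun s => (v s : ℂ) * e s) := by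
    intro v hv
    refine (hv.ofReal (𝕜 := ℂ)).mul_bdd (c := 1) hec.aestronglyMeasurable ?_
    exact Filter.Eventually.of_forall fun s => (hen s).le
  have hep : ∀ s, e (s + h) = - e s := by
    intro s
    have : -Complex.I * ((R * (s + h) : ℝ) : ℂ)
        = -Complex.I * ((R * s : ℝ) : ℂ) - (Real.pi : ℂ) * Complex.I := by
      rw [← hRh]; push_cast; ring
    simp only [he]
    rw [this, Complex.exp_sub, Complex.exp_pi_mul_I, div_neg, div_one]
  have hem : ∀ s, e (s - h) = - e s := by
    intro s
    have := hep (s - h)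
    rw [sub_add_cancel] at this
    rw [this, neg_neg]
  set F := ∫ s, (w s : ℂ) * e s with hF
  have hip : Integrable (fun s => w (s + h)) := hint.comp_add_right h
  have him : Integrable (fun s => w (s - h)) := hint.comp_sub_right h
  have hFp : ∫ s, (w (s + h) : ℂ) * e s = -F := by
    have := integral_add_right_eq_self (μ := volume) (fun s => (w s : ℂ) * e s) h
    simp only [hep] at this
    rw [hF, ← this, ← integral_neg]
    simp
  have hFm : ∫ s, (w (s - h) : ℂ) * e s = -F := by
    have := integral_sub_right_eq_self (μ := volume) (fun s => (w s : ℂ) * e s) h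
    simp only [hem] at this
    rw [hF, ← this, ← integral_neg]
    simp
  set D : ℝ → ℝ := fun s => 2 * w s - w (s - h) - w (s + h) with hD
  have hDi : Integrable D := ((hint.const_mul 2).sub him).sub hip
  have hD0 : ∫ s, D s = 0 := by
    have h1 := integral_sub_right_eq_self (μ := volume) w h
    have h2 := integral_add_right_eq_self (μ := volume) w h
    have hi2 : Integrable (fun s => 2 * w s - w (s - h)) := (hint.const_mul 2).sub him
    simp only [hD]
    rw [integral_sub hi2 hip, integral_sub (hint.const_mul 2) him,
      integral_const_mul, h1, h2]
    ring
  have h4 : ∫ s, (D s : ℂ) * e s = 4 * F := by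
    have : ∀ s, (D s : ℂ) * e s
        = 2 * ((w s : ℂ) * e s) - (w (s - h) : ℂ) * e s - (w (s + h) : ℂ) * e s := by
      intro s; simp only [hD]; push_cast; ring
    have hi2 : Integrable (fun s => 2 * ((w s : ℂ) * e s) - (w (s - h) : ℂ) * e s) :=
      ((hI w hint).const_mul 2).sub (hI _ him)
    simp only [this]
    rw [integral_sub hi2 (hI _ hip),
      integral_sub ((hI w hint).const_mul 2) (hI _ him), integral_const_mul, hFp, hFm, ← hF]
    ring
  -- The negative part of `D` lives within distance `h` of the two endpoints.
  set S : ℝ → ℝ := fun s => (Icc (α - h) (α + h)).indicator (fun _ => 4 * W) s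
    + (Icc (β - h) (β + h)).indicator (fun _ => 4 * W) s with hS
  have hSi1 : ∀ c : ℝ, Integrable ((Icc (c - h) (c + h)).indicator (fun _ => 4 * W)) := by
    intro c
    exact (integrable_indicator_iff measurableSet_Icc).2 (integrableOn_const (by simp))
  have hSi : Integrable S := (hSi1 α).add (hSi1 β)
  have hSint : ∫ s, S s = 16 * h * W := by
    simp only [hS]
    rw [integral_add (hSi1 α) (hSi1 β), integral_indicator_const _ measurableSet_Icc,
      integral_indicator_const _ measurableSet_Icc]
    simp only [Measure.real, Real.volume_Icc, smul_eq_mul]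
    rw [ENNReal.toReal_ofReal (by linarith), ENNReal.toReal_ofReal (by linarith)]
    ring
  have hpt : ∀ s, |D s| ≤ D s + S s := by
    intro s
    have hn : ∀ c, 0 ≤ (Icc (c - h) (c + h)).indicator (fun _ => 4 * W) s := fun c =>
      indicator_nonneg (fun _ _ => by positivity) s
    have hSn : 0 ≤ S s := add_nonneg (hn α) (hn β)
    have key : 0 ≤ D s ∨ (s ∈ Icc (α - h) (α + h) ∨ s ∈ Icc (β - h) (β + h)) ∧
        w (s - h) ≤ W ∧ w (s + h) ≤ W := by
      by_cases h1 : s < α - h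
      · left
        simp only [hD]
        rw [hsupp (s - h) (Or.inl (by linarith)), hsupp (s + h) (Or.inl (by linarith))]
        linarith [hw0 s]
      by_cases h2 : β + h < s
      · left
        simp only [hD]
        rw [hsupp (s - h) (Or.inr (by linarith)), hsupp (s + h) (Or.inr (by linarith))]
        linarith [hw0 s]
      by_cases h3 : s < α + h
      · right
        exact ⟨Or.inl ⟨by linarith, h3.le⟩, hcap _ (Or.inl (by linarith)),
          hcap _ (Or.inl (by linarith))⟩
      by_cases h5 : β - h < s
      · right
        exact ⟨Or.inr ⟨h5.le, by linarith⟩, hcap _ (Or.inr (by linarith)),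
          hcap _ (Or.inr (by linarith))⟩
      left
      have := hmid s (by linarith) (by linarith)
      simp only [hD]; linarith
    rcases key with hk | ⟨hk, hk1, hk2⟩
    · rw [abs_of_nonneg hk]; linarith
    · have hS4 : 4 * W ≤ S s := by
        rcases hk with hk | hk
        · have := hn β
          simp only [hS]; rw [indicator_of_mem hk]; linarith
        · have := hn α
          simp only [hS]; rw [indicator_of_mem hk]; linarith
      have : -(2 * W) ≤ D s := by
        simp only [hD]; linarith [hw0 s]
      rcases abs_cases (D s) with ⟨h1, _⟩ | ⟨h1, _⟩ <;> rw [h1] <;> linarith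
  have hfin : ‖4 * F‖ ≤ 16 * h * W := by
    rw [← h4]
    calc ‖∫ s, (D s : ℂ) * e s‖ ≤ ∫ s, ‖(D s : ℂ) * e s‖ := norm_integral_le_integral_norm _
      _ = ∫ s, |D s| := by
        congr 1; ext s; rw [norm_mul, hen, mul_one, Complex.norm_real, Real.norm_eq_abs]
      _ ≤ ∫ s, (D s + S s) :=
        integral_mono hDi.abs (hDi.add hSi) hpt
      _ = 16 * h * W := by
        rw [integral_add hDi hSi, hD0, hSint, zero_add]
  rw [norm_mul] at hfin
  norm_num at hfin
  linarith

/-! ### Slices of a planar convex body -/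

/-- The length of the slice of `K` at height `s` along `b 0`. -/
def sliceLen (b : OrthonormalBasis (Fin 2) ℝ E2) (K : Set E2) (s : ℝ) : ℝ :=
  volume.real {y : ℝ | s • b 0 + y • b 1 ∈ K}

/-- Fubini in the orthonormal coordinates `(s, y) ↦ s • b 0 + y • b 1`. -/
theorem fourierInd_eq_slices (b : OrthonormalBasis (Fin 2) ℝ E2) (K : Set E2) (hK : IsCompact K)
    (R : ℝ) : Integrable (sliceLen b K) ∧
      fourierInd K (R • b 0)
        = ∫ s, (sliceLen b K s : ℂ) * Complex.exp (-Complex.I * ((R * s : ℝ) : ℂ)) := by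
  set e : (Fin 2 → ℝ) ≃ᵐ E2 := (MeasurableEquiv.toLp 2 (Fin 2 → ℝ)).trans
    b.repr.symm.toHomeomorph.toMeasurableEquiv with he
  set Φ : ℝ × ℝ ≃ᵐ E2 := MeasurableEquiv.finTwoArrow.symm.trans e with hΦ
  have hΦv : ∀ q : ℝ × ℝ, Φ q = q.1 • b 0 + q.2 • b 1 := by
    intro q
    have : Φ q = b.repr.symm (WithLp.toLp 2 ![q.1, q.2]) := rfl
    rw [this, ← b.sum_repr_symm]
    simp
  have hmp : MeasurePreserving Φ volume volume := by
    have h1 : MeasurePreserving (MeasurableEquiv.finTwoArrow (α := ℝ)).symm volume volume :=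
      (volume_preserving_finTwoArrow ℝ).symm _
    have h2 := PiLp.volume_preserving_toLp (Fin 2)
    exact b.measurePreserving_repr_symm.comp (h2.comp h1)
  have hKm : MeasurableSet K := hK.isClosed.measurableSet
  have hslice : ∀ s : ℝ, MeasurableSet {y : ℝ | s • b 0 + y • b 1 ∈ K} := by
    intro s
    have hc : Continuous fun y : ℝ => s • b 0 + y • b 1 := by fun_prop
    exact hc.measurable hKm
  have hKi : Integrable (K.indicator (fun _ => (1 : ℝ))) :=
    (integrable_indicator_iff hKm).2 (integrableOn_const hK.measure_lt_top.ne)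
  have hi1 : Integrable (fun q : ℝ × ℝ => K.indicator (fun _ => (1 : ℝ)) (Φ q))
      (volume.prod volume) :=
    (hmp.integrable_comp_emb Φ.measurableEmbedding).2 hKi
  have hw1 : ∀ s, ∫ y, K.indicator (fun _ => (1 : ℝ)) (Φ (s, y)) = sliceLen b K s := by
    intro s
    have : ∀ y, K.indicator (fun _ => (1 : ℝ)) (Φ (s, y))
        = {y : ℝ | s • b 0 + y • b 1 ∈ K}.indicator (fun _ => (1 : ℝ)) y := by
      intro y
      rw [hΦv]
      rfl
    simp only [this]
    rw [integral_indicator_const _ (hslice s), smul_eq_mul, mul_one]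
    rfl
  refine ⟨?_, ?_⟩
  · have := hi1.integral_prod_left
    simpa only [hw1] using this
  · set f : E2 → ℂ := fun x => Complex.exp (-Complex.I * (⟪x, R • b 0⟫ : ℝ)) with hf
    have hfc : Continuous f := by simp only [hf]; fun_prop
    have hfi : Integrable (K.indicator f) :=
      (integrable_indicator_iff hKm).2 (hfc.continuousOn.integrableOn_compact hK)
    have hi2 : Integrable (fun q : ℝ × ℝ => K.indicator f (Φ q)) (volume.prod volume) :=
      (hmp.integrable_comp_emb Φ.measurableEmbedding).2 hfi
    have hfv : ∀ s y : ℝ, f (s • b 0 + y • b 1)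
        = Complex.exp (-Complex.I * ((R * s : ℝ) : ℂ)) := by
      intro s y
      have h0 : ⟪b 0, b 0⟫ = 1 := by
        rw [real_inner_self_eq_norm_sq, b.norm_eq_one]; norm_num
      have h1 : ⟪b 1, b 0⟫ = 0 := b.inner_eq_zero (by decide)
      simp only [hf]
      rw [inner_add_left, inner_smul_left, inner_smul_left, inner_smul_right, inner_smul_right,
        h0, h1]
      simp [mul_comm]
    have : fourierInd K (R • b 0) = ∫ x, K.indicator f x := by
      rw [integral_indicator hKm]; rfl
    rw [this, ← hmp.integral_comp Φ.measurableEmbedding]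
    rw [show (volume : Measure (ℝ × ℝ)) = volume.prod volume from rfl, integral_prod _ hi2]
    congr 1
    ext s
    rw [← hw1 s, ← integral_complex_ofReal, ← integral_mul_const]
    congr 1
    ext y
    rw [hΦv]
    by_cases hm : s • b 0 + y • b 1 ∈ K
    · simp only [indicator_of_mem hm]
      rw [hfv]; simp
    · simp only [indicator_of_notMem hm]
      simp

theorem slice_isCompact (b : OrthonormalBasis (Fin 2) ℝ E2) {K : Set E2} (hK : IsCompact K)
    (s : ℝ) : IsCompact {y : ℝ | s • b 0 + y • b 1 ∈ K} := by
  have hc : Continuous fun y : ℝ => s • b 0 + y • b 1 := by fun_prop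
  refine Metric.isCompact_of_isClosed_isBounded (hK.isClosed.preimage hc) ?_
  obtain ⟨C, hC⟩ := hK.isBounded.exists_norm_le
  refine (isBounded_iff_forall_norm_le).2 ⟨C + ‖s • b 0‖, fun y hy => ?_⟩
  have h1 := hC _ hy
  have h2 : ‖y • b 1‖ = ‖y‖ := by rw [norm_smul, b.norm_eq_one, mul_one]
  have h3 : ‖y • b 1‖ ≤ ‖s • b 0 + y • b 1‖ + ‖s • b 0‖ := by
    have := norm_sub_le (s • b 0 + y • b 1) (s • b 0)
    rwa [add_sub_cancel_left] at this
  linarith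

theorem measureReal_le_sSup_sub_sInf {A : Set ℝ} (hA : IsCompact A) (hne : A.Nonempty) :
    volume.real A ≤ sSup A - sInf A := by
  have hA' : A ⊆ Icc (sInf A) (sSup A) := fun y hy =>
    ⟨csInf_le hA.bddBelow hy, le_csSup hA.bddAbove hy⟩
  have hle : sInf A ≤ sSup A := csInf_le_csSup hne hA.bddBelow hA.bddAbove
  have := measureReal_mono (μ := volume) hA' (by simp)
  rwa [Measure.real, Measure.real, Real.volume_Icc, ENNReal.toReal_ofReal (by linarith)] at this

/-- One-dimensional Brunn–Minkowski: slice lengths of a convex body are midpoint concave on the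
set of heights with nonempty slices. -/
theorem sliceLen_midconcave (b : OrthonormalBasis (Fin 2) ℝ E2) {K : Set E2} (hK : IsCompact K)
    (hc : Convex ℝ K) (s h : ℝ) (h1 : {y : ℝ | (s - h) • b 0 + y • b 1 ∈ K}.Nonempty)
    (h2 : {y : ℝ | (s + h) • b 0 + y • b 1 ∈ K}.Nonempty) :
    sliceLen b K (s - h) + sliceLen b K (s + h) ≤ 2 * sliceLen b K s := by
  have c1 := slice_isCompact b hK (s - h)
  have c2 := slice_isCompact b hK (s + h)
  have m1 := measureReal_le_sSup_sub_sInf c1 h1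
  have m2 := measureReal_le_sSup_sub_sInf c2 h2
  have i1 := c1.sInf_mem h1
  have i2 := c2.sInf_mem h2
  have j1 := c1.sSup_mem h1
  have j2 := c2.sSup_mem h2
  unfold sliceLen
  set A1 := {y : ℝ | (s - h) • b 0 + y • b 1 ∈ K}
  set A2 := {y : ℝ | (s + h) • b 0 + y • b 1 ∈ K}
  have hmid : ∀ y1 ∈ A1, ∀ y2 ∈ A2, s • b 0 + ((y1 + y2) / 2) • b 1 ∈ K := by
    intro y1 hy1 y2 hy2
    have := hc hy1 hy2 (a := 1 / 2) (b := 1 / 2) (by norm_num) (by norm_num) (by norm_num)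
    convert this using 1
    module
  have hle1 : sInf A1 ≤ sSup A1 := csInf_le_csSup h1 c1.bddBelow c1.bddAbove
  have hle2 : sInf A2 ≤ sSup A2 := csInf_le_csSup h2 c2.bddBelow c2.bddAbove
  set lo := (sInf A1 + sInf A2) / 2 with hlo
  set hi := (sSup A1 + sSup A2) / 2 with hhi
  have hlohi : lo ≤ hi := by rw [hlo, hhi]; linarith
  have hsubI : Icc lo hi ⊆ {y : ℝ | s • b 0 + y • b 1 ∈ K} := by
    have hconv : Convex ℝ {y : ℝ | s • b 0 + y • b 1 ∈ K} := by
      intro y1 hy1 y2 hy2 p q hp hq hpq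
      have := hc hy1 hy2 hp hq hpq
      simp only [mem_ofPred_eq]
      convert this using 1
      obtain rfl : q = 1 - p := by linarith
      module
    exact hconv.ordConnected.out (hmid _ i1 _ i2) (hmid _ j1 _ j2)
  have m0 := measureReal_mono (μ := volume) hsubI (slice_isCompact b hK s).measure_lt_top.ne
  rw [Measure.real, Real.volume_Icc, ENNReal.toReal_ofReal (by linarith)] at m0
  linarith

/-- The Fourier transform of a convex body in direction `b 0` is controlled by the chords orthogonal
to `b 0` at depth at most `2π/R` from either end. -/
theorem norm_fourierInd_le_of_caps (b : OrthonormalBasis (Fin 2) ℝ E2) {K : Set E2}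
    (hK : IsCompact K) (hc : Convex ℝ K) {α β R h W : ℝ}
    (hα : ∀ x ∈ K, α ≤ ⟪b 0, x⟫) (hα' : ∃ m ∈ K, ⟪b 0, m⟫ = α)
    (hβ : ∀ x ∈ K, ⟪b 0, x⟫ ≤ β) (hβ' : ∃ m ∈ K, ⟪b 0, m⟫ = β)
    (hh : 0 < h) (hRh : R * h = Real.pi) (hW : 0 ≤ W)
    (hcap : ∀ x ∈ K, ∀ y ∈ K, ⟪b 0, x⟫ = ⟪b 0, y⟫ →
      (⟪b 0, x⟫ ≤ α + 2 * h ∨ β - 2 * h ≤ ⟪b 0, x⟫) → |⟪b 1, x⟫ - ⟪b 1, y⟫| ≤ W) :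
    ‖fourierInd K (R • b 0)‖ ≤ 4 * h * W := by
  obtain ⟨hint, hF⟩ := fourierInd_eq_slices b K hK R
  have h00 : ⟪b 0, b 0⟫ = 1 := by
    rw [real_inner_self_eq_norm_sq, b.norm_eq_one]; norm_num
  have h11 : ⟪b 1, b 1⟫ = 1 := by
    rw [real_inner_self_eq_norm_sq, b.norm_eq_one]; norm_num
  have h01 : ⟪b 0, b 1⟫ = 0 := b.inner_eq_zero (by decide)
  have h10 : ⟪b 1, b 0⟫ = 0 := b.inner_eq_zero (by decide)
  have hi0 : ∀ s y : ℝ, ⟪b 0, s • b 0 + y • b 1⟫ = s := by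
    intro s y
    rw [inner_add_right, inner_smul_right, inner_smul_right, h00, h01]; ring
  have hi1 : ∀ s y : ℝ, ⟪b 1, s • b 0 + y • b 1⟫ = y := by
    intro s y
    rw [inner_add_right, inner_smul_right, inner_smul_right, h10, h11]; ring
  have hne : ∀ s, α ≤ s → s ≤ β → {y : ℝ | s • b 0 + y • b 1 ∈ K}.Nonempty := by
    intro s h1 h2
    have himg : Convex ℝ ((innerSL ℝ (b 0)) '' K) :=
      hc.linear_image (innerSL ℝ (b 0)).toLinearMap
    have hs : s ∈ (innerSL ℝ (b 0)) '' K := by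
      obtain ⟨m, hm, hme⟩ := hα'
      obtain ⟨m', hm', hme'⟩ := hβ'
      exact himg.ordConnected.out ⟨m, hm, hme⟩ ⟨m', hm', hme'⟩ ⟨h1, h2⟩
    obtain ⟨x, hx, hxs⟩ := hs
    refine ⟨⟪b 1, x⟫, ?_⟩
    have hx2 := b.sum_repr' x
    rw [Fin.sum_univ_two] at hx2
    have hxs' : ⟪b 0, x⟫ = s := hxs
    rw [hxs'] at hx2
    simpa only [mem_ofPred_eq, hx2] using hx
  rw [hF]
  refine norm_fourier_le_of_midconcave (sliceLen b K) α β h R W hint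
    (fun s => measureReal_nonneg) ?_ hh hRh hW ?_ ?_
  · intro s hs
    have : {y : ℝ | s • b 0 + y • b 1 ∈ K} = ∅ := by
      rw [eq_empty_iff_forall_notMem]
      intro y hy
      have h1 := hα _ hy
      have h2 := hβ _ hy
      rw [hi0] at h1 h2
      rcases hs with hs | hs <;> linarith
    simp [sliceLen, this]
  · intro s hs
    rcases {y : ℝ | s • b 0 + y • b 1 ∈ K}.eq_empty_or_nonempty with he | he
    · simpa [sliceLen, he] using hW
    · have hcp := slice_isCompact b hK s
      refine (measureReal_le_sSup_sub_sInf hcp he).trans ?_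
      have h1 := hcap _ (hcp.sSup_mem he) _ (hcp.sInf_mem he)
      rw [hi0, hi0, hi1, hi1] at h1
      exact (le_abs_self _).trans (h1 rfl hs)
  · intro s h1 h2
    exact sliceLen_midconcave b hK hc s h (hne _ h1 (by linarith)) (hne _ (by linarith) h2)

/-! ### The polar set and its caps -/

theorem mem_polarSet_iff {Ω : Set E2} (hbdd : Bornology.IsBounded Ω) (h0 : (0 : E2) ∈ Ω) (x : E2) :
    x ∈ polarSet Ω ↔ ∀ y ∈ Ω, ⟪y, x⟫ ≤ 1 := by
  have hb : BddAbove ((fun y => ⟪y, x⟫) '' Ω) := by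
    obtain ⟨C, hC⟩ := hbdd.exists_norm_le
    refine ⟨C * ‖x‖, ?_⟩
    rintro _ ⟨y, hy, rfl⟩
    exact (real_inner_le_norm y x).trans
      (mul_le_mul_of_nonneg_right (hC y hy) (norm_nonneg x))
  have : x ∈ polarSet Ω ↔ sSup ((fun y => ⟪y, x⟫) '' Ω) ≤ 1 := Iff.rfl
  rw [this, csSup_le_iff hb ⟨_, mem_image_of_mem _ h0⟩]
  simp

theorem polarSet_norm_le {Ω : Set E2} {r : ℝ} (hr : 0 < r)
    (hball : Metric.ball (0 : E2) r ⊆ Ω) {x : E2} (hx : ∀ y ∈ Ω, ⟪y, x⟫ ≤ 1) :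
    ‖x‖ ≤ 2 / r := by
  by_cases hx0 : x = 0
  · rw [hx0, norm_zero]; positivity
  have hn : 0 < ‖x‖ := norm_pos_iff.2 hx0
  have hm : (r / 2 / ‖x‖) • x ∈ Metric.ball (0 : E2) r := by
    rw [mem_ball_zero_iff, norm_smul, Real.norm_of_nonneg (by positivity),
      div_mul_cancel₀ _ hn.ne']
    linarith
  have := hx _ (hball hm)
  rw [inner_smul_left, real_inner_self_eq_norm_sq] at this
  simp only [conj_trivial] at this
  have h2 : r / 2 / ‖x‖ * ‖x‖ ^ 2 = r / 2 * ‖x‖ := by field_simp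
  rw [h2] at this
  rw [le_div_iff₀ hr]; linarith

theorem polarSet_isCompact {Ω : Set E2} {r : ℝ} (hr : 0 < r)
    (hball : Metric.ball (0 : E2) r ⊆ Ω) (hbdd : Bornology.IsBounded Ω) (h0 : (0 : E2) ∈ Ω) :
    IsCompact (polarSet Ω) := by
  have he : polarSet Ω = ⋂ y ∈ Ω, {x | ⟪y, x⟫ ≤ 1} := by
    ext x; rw [mem_polarSet_iff hbdd h0]; simp
  refine Metric.isCompact_of_isClosed_isBounded ?_ ?_
  · rw [he]
    exact isClosed_biInter fun y _ => isClosed_le (by fun_prop) continuous_const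
  · exact (isBounded_iff_forall_norm_le).2 ⟨2 / r, fun x hx =>
      polarSet_norm_le hr hball ((mem_polarSet_iff hbdd h0 x).1 hx)⟩

theorem polarSet_convex {Ω : Set E2} (hbdd : Bornology.IsBounded Ω) (h0 : (0 : E2) ∈ Ω) :
    Convex ℝ (polarSet Ω) := by
  intro x hx y hy p q hp hq hpq
  rw [mem_polarSet_iff hbdd h0] at *
  intro z hz
  rw [inner_add_right, inner_smul_right, inner_smul_right]
  nlinarith [hx z hz, hy z hz]

/-- In direction `θ` the polar body is supported at height `β = 1/λ`, where `λθ ∈ ∂Ω`. A chord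
orthogonal to `θ` at depth `δ` below this height is short as soon as the unit tangent of `∂Ω`
oscillates by at most `ω` on arcs of length `τ`: the inequality `⟪γ (t₀ ± τ), x⟫ ≤ 1` bounds
`|⟪γ' t₀, x⟫|`, and `γ' t₀` is uniformly transversal to `θ`. -/
theorem polar_cap {Ω : Set E2} (hconv : Convex ℝ Ω) (hopen : IsOpen Ω)
    {r ρ : ℝ} (hr : 0 < r) (hball : Metric.ball (0 : E2) r ⊆ Ω)
    (hbdd : Bornology.IsBounded Ω) (h0 : (0 : E2) ∈ Ω) (hρ : ∀ y ∈ frontier Ω, ‖y‖ ≤ ρ)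
    {γ γ' : ℝ → E2} (hγ : ∀ t, HasDerivAt γ (γ' t) t) (hunit : ∀ t, ‖γ' t‖ = 1)
    (hsurj : ∀ y ∈ frontier Ω, ∃ t, γ t = y) (hfr : ∀ t, γ t ∈ frontier Ω)
    {θ u : E2} (hθ : ‖θ‖ = 1) (hu : ‖u‖ = 1)
    (hspan : ∀ x : E2, x = ⟪θ, x⟫ • θ + ⟪u, x⟫ • u) :
    ∃ β : ℝ, (∀ x ∈ polarSet Ω, ⟪θ, x⟫ ≤ β) ∧ (∃ m ∈ polarSet Ω, ⟪θ, m⟫ = β) ∧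
      ∀ τ ω δ : ℝ, 0 < τ → 0 ≤ ω → 0 ≤ δ →
        (∀ s t, |s - t| ≤ τ → ‖γ' s - γ' t‖ ≤ ω) →
        ∀ x ∈ polarSet Ω, ∀ y ∈ polarSet Ω, ⟪θ, x⟫ = ⟪θ, y⟫ → β - δ ≤ ⟪θ, x⟫ →
          |⟪u, x⟫ - ⟪u, y⟫| ≤ 2 * (1 + 2 * ρ / r) * (ρ * δ / τ + 2 / r * ω) := by
  have hθ0 : θ ≠ 0 := by rintro rfl; simp at hθ
  have hnhds : Ω ∈ nhds (0 : E2) := hopen.mem_nhds h0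
  have hgpos : 0 < gauge Ω θ :=
    (gauge_pos (absorbent_nhds_zero hnhds) (NormedSpace.isVonNBounded_of_isBounded ℝ hbdd)).2 hθ0
  set l := (gauge Ω θ)⁻¹ with hl
  have hlpos : 0 < l := inv_pos.2 hgpos
  have hpfr : l • θ ∈ frontier Ω := by
    rw [← gauge_eq_one_iff_mem_frontier hconv hnhds, gauge_smul_of_nonneg hlpos.le, smul_eq_mul,
      hl, inv_mul_cancel₀ hgpos.ne']
  have hlρ : l ≤ ρ := by
    have := hρ _ hpfr
    rwa [norm_smul, hθ, mul_one, Real.norm_of_nonneg hlpos.le] at this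
  have hρ0 : 0 < ρ := hlpos.trans_le hlρ
  obtain ⟨t₀, ht₀⟩ := hsurj _ hpfr
  have hK : ∀ x ∈ polarSet Ω, ∀ y ∈ frontier Ω, ⟪y, x⟫ ≤ 1 := by
    intro x hx y hy
    have h1 := (mem_polarSet_iff hbdd h0 x).1 hx
    have hcl : IsClosed {y : E2 | ⟪y, x⟫ ≤ 1} := isClosed_le (by fun_prop) continuous_const
    exact closure_minimal (s := Ω) h1 hcl (frontier_subset_closure hy)
  -- The supporting line of `Ω` at `l • θ`, normalised to lie in the polar body.
  obtain ⟨m, hmK, hm1⟩ : ∃ m ∈ polarSet Ω, ⟪l • θ, m⟫ = 1 := by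
    have hnot : l • θ ∉ Ω := fun h => by
      have := hopen.frontier_eq ▸ hpfr
      exact this.2 h
    obtain ⟨f, hf⟩ := geometric_hahn_banach_open_point hconv hopen hnot
    have hfp : 0 < f (l • θ) := by simpa using hf 0 h0
    set v := (InnerProductSpace.toDual ℝ E2).symm f with hv
    have hfv : ∀ y, ⟪y, v⟫ = f y := by
      intro y; rw [real_inner_comm, hv, InnerProductSpace.toDual_symm_apply]
    refine ⟨(f (l • θ))⁻¹ • v, ?_, ?_⟩
    · rw [mem_polarSet_iff hbdd h0]
      intro y hy
      rw [inner_smul_right, hfv, inv_mul_le_iff₀ hfp, mul_one]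
      exact (hf y hy).le
    · rw [inner_smul_right, hfv, inv_mul_cancel₀ hfp.ne']
  have hmθ : ⟪θ, m⟫ = l⁻¹ := by
    rw [inner_smul_left] at hm1
    simp only [conj_trivial] at hm1
    exact eq_inv_of_mul_eq_one_right hm1
  have hderiv : ∀ x t, HasDerivAt (fun t => ⟪γ t, x⟫) ⟪γ' t, x⟫ t := by
    intro x t
    simpa using (hγ t).inner ℝ (hasDerivAt_const t x)
  have hmγ : ⟪γ' t₀, m⟫ = 0 := by
    have hmax : IsLocalMax (fun t => ⟪γ t, m⟫) t₀ := by
      refine Filter.Eventually.of_forall fun t => ?_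
      simp only
      rw [ht₀, hm1]
      exact hK m hmK _ (hfr t)
    exact hmax.hasDerivAt_eq_zero (hderiv m t₀)
  have hmn : ‖m‖ ≤ 2 / r := polarSet_norm_le hr hball ((mem_polarSet_iff hbdd h0 m).1 hmK)
  -- Transversality of the tangent at `l • θ` to the ray through `θ`.
  have htrans : 1 ≤ |⟪u, γ' t₀⟫| * (1 + 2 * ρ / r) := by
    have hs := hspan (γ' t₀)
    have e1 : ⟪θ, γ' t₀⟫ * l⁻¹ + ⟪u, γ' t₀⟫ * ⟪u, m⟫ = 0 := by
      rw [← hmγ, ← hmθ]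
      nth_rewrite 3 [hs]
      rw [inner_add_left, inner_smul_left, inner_smul_left]
      simp
    have e2 : ⟪θ, γ' t₀⟫ = - (l * (⟪u, γ' t₀⟫ * ⟪u, m⟫)) := by
      field_simp at e1
      linarith
    have e3 : |⟪u, m⟫| ≤ 2 / r := by
      have := abs_real_inner_le_norm u m
      rw [hu, one_mul] at this
      exact this.trans hmn
    have e4 : |⟪θ, γ' t₀⟫| ≤ |⟪u, γ' t₀⟫| * (2 * ρ / r) := by
      rw [e2, abs_neg, abs_mul, abs_mul, abs_of_pos hlpos]
      calc l * (|⟪u, γ' t₀⟫| * |⟪u, m⟫|) ≤ ρ * (|⟪u, γ' t₀⟫| * (2 / r)) := by gcongr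
        _ = _ := by ring
    have e5 : (1 : ℝ) ≤ |⟪θ, γ' t₀⟫| + |⟪u, γ' t₀⟫| := by
      have : ‖γ' t₀‖ ≤ ‖⟪θ, γ' t₀⟫ • θ‖ + ‖⟪u, γ' t₀⟫ • u‖ := by
        nth_rewrite 1 [hs]; exact norm_add_le _ _
      rwa [hunit, norm_smul, norm_smul, hθ, hu, mul_one, mul_one, Real.norm_eq_abs,
        Real.norm_eq_abs] at this
    linarith
  refine ⟨l⁻¹, ?_, ⟨m, hmK, hmθ⟩, ?_⟩
  · intro x hx
    have := hK x hx _ hpfr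
    rw [inner_smul_left] at this
    simp only [conj_trivial] at this
    rw [← one_div, le_div_iff₀ hlpos]; linarith
  intro τ ω δ hτ hω hδ hmod x hx y hy hxy hdepth
  have hcap : ∀ x ∈ polarSet Ω, l⁻¹ - δ ≤ ⟪θ, x⟫ →
      |⟪γ' t₀, x⟫| ≤ ρ * δ / τ + 2 / r * ω := by
    intro x hx hd
    have hxn : ‖x‖ ≤ 2 / r := polarSet_norm_le hr hball ((mem_polarSet_iff hbdd h0 x).1 hx)
    have hpx : 1 - ρ * δ ≤ ⟪γ t₀, x⟫ := by
      rw [ht₀, inner_smul_left]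
      simp only [conj_trivial]
      have h1 : l * (l⁻¹ - δ) ≤ l * ⟪θ, x⟫ := by gcongr
      rw [mul_sub, mul_inv_cancel₀ hlpos.ne'] at h1
      have h2 : l * δ ≤ ρ * δ := by gcongr
      linarith
    have hcont : Continuous fun t => ⟪γ t, x⟫ :=
      continuous_iff_continuousAt.2 fun t => (hderiv x t).continuousAt
    have hclose : ∀ c, |c - t₀| ≤ τ → |⟪γ' c, x⟫ - ⟪γ' t₀, x⟫| ≤ 2 / r * ω := by
      intro c hc
      rw [← inner_sub_left]
      calc |⟪γ' c - γ' t₀, x⟫| ≤ ‖γ' c - γ' t₀‖ * ‖x‖ := abs_real_inner_le_norm _ _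
        _ ≤ ω * (2 / r) := by
          gcongr
          exact hmod c t₀ hc
        _ = _ := mul_comm _ _
    obtain ⟨c, hc, hce⟩ := exists_hasDerivAt_eq_slope (fun t => ⟪γ t, x⟫) (fun t => ⟪γ' t, x⟫)
      (show t₀ < t₀ + τ by linarith) hcont.continuousOn (fun t _ => hderiv x t)
    obtain ⟨d, hd', hde⟩ := exists_hasDerivAt_eq_slope (fun t => ⟪γ t, x⟫) (fun t => ⟪γ' t, x⟫)
      (show t₀ - τ < t₀ by linarith) hcont.continuousOn (fun t _ => hderiv x t)
    have hc1 := abs_le.1 (hclose c (abs_le.2 ⟨by linarith [hc.1], by linarith [hc.2]⟩))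
    have hd1 := abs_le.1 (hclose d (abs_le.2 ⟨by linarith [hd'.1], by linarith [hd'.2]⟩))
    have hc2 : ⟪γ' c, x⟫ ≤ ρ * δ / τ := by
      simp only [add_sub_cancel_left] at hce
      rw [hce]
      gcongr
      linarith [hK x hx _ (hfr (t₀ + τ))]
    have hd2 : -(ρ * δ / τ) ≤ ⟪γ' d, x⟫ := by
      simp only [sub_sub_cancel] at hde
      rw [hde, ← neg_div]
      gcongr
      linarith [hK x hx _ (hfr (t₀ - τ))]
    exact abs_le.2 ⟨by linarith, by linarith⟩
  have hx1 := hcap x hx hdepth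
  have hy1 := hcap y hy (hxy ▸ hdepth)
  have hexp : ∀ z, ⟪γ' t₀, z⟫ = ⟪θ, γ' t₀⟫ * ⟪θ, z⟫ + ⟪u, γ' t₀⟫ * ⟪u, z⟫ := by
    intro z
    nth_rewrite 1 [hspan (γ' t₀)]
    rw [inner_add_left, inner_smul_left, inner_smul_left]
    simp
  have hdiff : |⟪u, γ' t₀⟫| * |⟪u, x⟫ - ⟪u, y⟫| ≤ 2 * (ρ * δ / τ + 2 / r * ω) := by
    rw [← abs_mul]
    have : ⟪u, γ' t₀⟫ * (⟪u, x⟫ - ⟪u, y⟫) = ⟪γ' t₀, x⟫ - ⟪γ' t₀, y⟫ := by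
      rw [hexp x, hexp y, hxy]; ring
    rw [this]
    have := abs_sub (⟪γ' t₀, x⟫) (⟪γ' t₀, y⟫)
    linarith
  have hc0 : 0 ≤ 1 + 2 * ρ / r := by positivity
  calc |⟪u, x⟫ - ⟪u, y⟫| = 1 * |⟪u, x⟫ - ⟪u, y⟫| := (one_mul _).symm
    _ ≤ (|⟪u, γ' t₀⟫| * (1 + 2 * ρ / r)) * |⟪u, x⟫ - ⟪u, y⟫| := by gcongr
    _ = (1 + 2 * ρ / r) * (|⟪u, γ' t₀⟫| * |⟪u, x⟫ - ⟪u, y⟫|) := by ring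
    _ ≤ (1 + 2 * ρ / r) * (2 * (ρ * δ / τ + 2 / r * ω)) := by gcongr
    _ = _ := by ring

/-! ### Modulus of continuity of the unit tangent -/

/-- The `L log^g L` bound on the curvature gives a modulus of continuity for the unit tangent:
on an arc, `κ ≤ M + log(2+M)^{-g} κ log(2+κ)^g` for every threshold `M`. -/
theorem tangent_modulus {Ω : Set E2} {γ γ' γ'' : ℝ → E2} {L : ℝ}
    (hbp : BoundaryParam Ω γ γ' γ'' L) {g : ℝ} (hg : 0 < g)
    (hLlogL : IntegrableOn
      (fun t => ‖γ'' t‖ * Real.log (2 + ‖γ'' t‖) ^ g) (Set.Icc 0 L))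
    {M τ : ℝ} (hM : 0 ≤ M) (hτL : τ ≤ L) (s t : ℝ) (hst : |s - t| ≤ τ) :
    ‖γ' s - γ' t‖ ≤ 2 * (M * τ + Real.log (2 + M) ^ (-g) *
      ∫ t in Set.Icc 0 L, ‖γ'' t‖ * Real.log (2 + ‖γ'' t‖) ^ g) := by
  obtain ⟨hL, hder, hcont, hunit, hper, himg, hinj, hii, hFTC⟩ := hbp
  set A := ∫ t in Set.Icc 0 L, ‖γ'' t‖ * Real.log (2 + ‖γ'' t‖) ^ g with hA
  set Q : ℝ → ℝ := fun t => ‖γ'' t‖ * Real.log (2 + ‖γ'' t‖) ^ g with hQ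
  have hlogκ : ∀ t, 0 < Real.log (2 + ‖γ'' t‖) := fun t =>
    Real.log_pos (by linarith [norm_nonneg (γ'' t)])
  have hQ0 : ∀ t, 0 ≤ Q t := fun t =>
    mul_nonneg (norm_nonneg _) (Real.rpow_nonneg (hlogκ t).le _)
  have hA0 : 0 ≤ A := integral_nonneg hQ0
  have hlogM : 0 < Real.log (2 + M) := Real.log_pos (by linarith)
  have hΛ : 0 < Real.log (2 + M) ^ (-g) := Real.rpow_pos_of_pos hlogM _
  have hτ0 : 0 ≤ τ := (abs_nonneg _).trans hst
  have hpt : ∀ t, ‖γ'' t‖ ≤ M + Real.log (2 + M) ^ (-g) * Q t := by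
    intro t
    by_cases h : ‖γ'' t‖ ≤ M
    · have := mul_nonneg hΛ.le (hQ0 t)
      linarith
    · push Not at h
      have h1 : Real.log (2 + M) ^ g ≤ Real.log (2 + ‖γ'' t‖) ^ g :=
        Real.rpow_le_rpow hlogM.le (Real.log_le_log (by linarith) (by linarith)) hg.le
      have h2 : Real.log (2 + M) ^ (-g) * Real.log (2 + M) ^ g = 1 := by
        rw [← Real.rpow_add hlogM]; simp
      have h3 : 1 ≤ Real.log (2 + M) ^ (-g) * Real.log (2 + ‖γ'' t‖) ^ g := by
        rw [← h2]; gcongr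
      have h4 := mul_le_mul_of_nonneg_left h3 (norm_nonneg (γ'' t))
      have h5 : ‖γ'' t‖ * (Real.log (2 + M) ^ (-g) * Real.log (2 + ‖γ'' t‖) ^ g)
        = Real.log (2 + M) ^ (-g) * Q t := by simp only [hQ]; ring
      linarith
  have hbase : ∀ p q, 0 ≤ p → p ≤ q → q ≤ L → q - p ≤ τ →
      ‖γ' q - γ' p‖ ≤ M * τ + Real.log (2 + M) ^ (-g) * A := by
    intro p q hp hpq hq hτ'
    have hipq : IntervalIntegrable γ'' volume p q := (hii p).symm.trans (hii q)
    have hQpq : IntervalIntegrable Q volume p q := by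
      rw [intervalIntegrable_iff_integrableOn_Ioc_of_le hpq]
      exact hLlogL.mono_set fun x hx => ⟨hp.trans hx.1.le, hx.2.trans hq⟩
    have e1 : γ' q - γ' p = ∫ s in p..q, γ'' s := by
      rw [hFTC q, hFTC p, add_sub_add_left_eq_sub,
        intervalIntegral.integral_interval_sub_left (hii q) (hii p)]
    rw [e1]
    calc ‖∫ s in p..q, γ'' s‖ ≤ ∫ s in p..q, ‖γ'' s‖ :=
          intervalIntegral.norm_integral_le_integral_norm hpq
      _ ≤ ∫ s in p..q, (M + Real.log (2 + M) ^ (-g) * Q s) :=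
          intervalIntegral.integral_mono_on hpq hipq.norm
            (intervalIntegrable_const.add (hQpq.const_mul _)) fun s _ => hpt s
      _ = (q - p) * M + Real.log (2 + M) ^ (-g) * ∫ s in p..q, Q s := by
          rw [intervalIntegral.integral_add intervalIntegrable_const (hQpq.const_mul _),
            intervalIntegral.integral_const, intervalIntegral.integral_const_mul, smul_eq_mul]
      _ ≤ τ * M + Real.log (2 + M) ^ (-g) * A := by
          gcongr
          rw [intervalIntegral.integral_of_le hpq]
          exact setIntegral_mono_set hLlogL (Filter.Eventually.of_forall hQ0)
            (LE.le.eventuallyLE fun x hx => ⟨hp.trans hx.1.le, hx.2.trans hq⟩)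
      _ = _ := by ring
  set B := M * τ + Real.log (2 + M) ^ (-g) * A with hB
  have hB0 : 0 ≤ B := by positivity
  have hper' : Function.Periodic γ' L := by
    intro t
    have h1 : HasDerivAt (fun x => γ (x + L)) (γ' (t + L)) t := (hder (t + L)).comp_add_const t L
    have h2 : (fun x => γ (x + L)) = γ := funext hper
    rw [h2] at h1
    exact h1.unique (hder t)
  have hle : ∀ p q, p ≤ q → q - p ≤ τ → ‖γ' q - γ' p‖ ≤ 2 * B := by
    intro p q hpq hτ'
    obtain ⟨n, hn, -⟩ := existsUnique_sub_zsmul_mem_Ico hL p 0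
    rw [← hper'.sub_zsmul_eq n (x := q), ← hper'.sub_zsmul_eq n (x := p)]
    rw [zero_add] at hn
    set p' := p - n • L
    have hq' : (q - n • L) - p' = q - p := by simp only [p']; ring
    set q' := q - n • L
    by_cases hc : q' ≤ L
    · exact (hbase p' q' hn.1 (by linarith) hc (by linarith)).trans (by linarith)
    · push Not at hc
      have e1 := hbase p' L hn.1 hn.2.le le_rfl (by linarith)
      have e2 := hbase 0 (q' - L) le_rfl (by linarith) (by linarith [hn.2]) (by linarith [hn.2])
      rw [hper'.sub_eq] at e2
      have e3 : γ' 0 = γ' L := by simpa using (hper' 0).symm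
      rw [e3] at e2
      have := norm_sub_le_norm_sub_add_norm_sub (γ' q') (γ' L) (γ' p')
      linarith
  rcases le_total s t with h | h
  · rw [norm_sub_rev]
    exact hle s t h (by rw [abs_of_nonpos (by linarith)] at hst; linarith)
  · exact hle t s h (by rw [abs_of_nonneg (by linarith)] at hst; linarith)

/-- With `R = q⁴`: a negative power of `R` is dominated by `log (2 + R) ^ (-g)`. -/
theorem inv_le_log_rpow {q g : ℝ} (hq : 1 ≤ q) (hg : 0 < g) :
    1 / q ≤ 3 * (4 * g) ^ g * Real.log (2 + q ^ 4) ^ (-g) := by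
  have hq4 : 1 ≤ q ^ 4 := one_le_pow₀ hq
  have hlog : 0 < Real.log (2 + q ^ 4) := Real.log_pos (by linarith)
  have h1 : Real.log (2 + q ^ 4) ≤ 4 * g * (3 * q) ^ (1 / g) := by
    have e1 : Real.log (2 + q ^ 4) ≤ Real.log ((3 * q) ^ 4) := by
      apply Real.log_le_log (by linarith)
      have : (3 * q) ^ 4 = 81 * q ^ 4 := by ring
      linarith
    rw [Real.log_pow] at e1
    have e2 := Real.log_le_rpow_div (x := 3 * q) (ε := 1 / g) (by linarith) (by positivity)
    have e3 : (3 * q) ^ (1 / g) / (1 / g) = g * (3 * q) ^ (1 / g) := by field_simp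
    rw [e3] at e2
    push_cast at e1
    linarith
  have h2 : Real.log (2 + q ^ 4) ^ g ≤ (4 * g) ^ g * (3 * q) := by
    refine (Real.rpow_le_rpow hlog.le h1 hg.le).trans_eq ?_
    rw [Real.mul_rpow (by positivity) (by positivity), ← Real.rpow_mul (by positivity),
      one_div, inv_mul_cancel₀ hg.ne', Real.rpow_one]
  have hp : 0 < Real.log (2 + q ^ 4) ^ g := Real.rpow_pos_of_pos hlog g
  rw [Real.rpow_neg hlog.le, ← div_eq_mul_inv, div_le_div_iff₀ (by linarith) hp]
  linarith

theorem log_two_add_rpow_le {q g : ℝ} (hq : 1 ≤ q) (hg : 0 < g) :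
    Real.log (2 + q) ^ (-g) ≤ 4 ^ g * Real.log (2 + q ^ 4) ^ (-g) := by
  have hq4 : 1 ≤ q ^ 4 := one_le_pow₀ hq
  have hlog4 : 0 < Real.log (2 + q ^ 4) := Real.log_pos (by linarith)
  have hlog : 0 < Real.log (2 + q) := Real.log_pos (by linarith)
  have h1 : Real.log (2 + q ^ 4) ≤ 4 * Real.log (2 + q) := by
    have e1 : Real.log (2 + q ^ 4) ≤ Real.log ((2 + q) ^ 4) := by
      apply Real.log_le_log (by linarith)
      have : (2 + q) ^ 4 = 16 + 32 * q + 24 * q ^ 2 + 8 * q ^ 3 + q ^ 4 := by ring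
      have : 0 ≤ 24 * q ^ 2 + 8 * q ^ 3 := by positivity
      linarith
    rw [Real.log_pow] at e1
    exact_mod_cast e1
  have h2 := Real.rpow_le_rpow hlog4.le h1 hg.le
  rw [Real.mul_rpow (by norm_num) hlog.le] at h2
  have hp : 0 < Real.log (2 + q) ^ g := Real.rpow_pos_of_pos hlog g
  have hp4 : 0 < Real.log (2 + q ^ 4) ^ g := Real.rpow_pos_of_pos hlog4 g
  rw [Real.rpow_neg hlog.le, Real.rpow_neg hlog4.le, ← div_eq_mul_inv, ← one_div,
    div_le_div_iff₀ hp hp4]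
  linarith

/-- Lemma 5.3: if `Ω` is a bounded open convex planar domain containing
the origin, with `C¹` boundary, absolutely continuous unit tangent, curvature
`κ = ‖γ''‖ ≥ a > 0` a.e. and `κ ∈ L log^γ L(∂Ω)`, then
`|χ̂_{Ω*}(ξ)| ≤ C (1+|ξ|)^{−1} (log(2+|ξ|))^{−γ}` for all `ξ`. -/
theorem statement10 (Ω : Set E2) (hconv : Convex ℝ Ω) (hopen : IsOpen Ω)
    (hbdd : Bornology.IsBounded Ω) (h0 : (0 : E2) ∈ Ω)
    (γ γ' γ'' : ℝ → E2) (L : ℝ) (hbp : BoundaryParam Ω γ γ' γ'' L)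
    (a g : ℝ) (ha : 0 < a) (hg : 0 < g)
    (hlow : ∀ᵐ t ∂(volume.restrict (Set.Icc 0 L)), a ≤ ‖γ'' t‖)
    (hLlogL : IntegrableOn
      (fun t => ‖γ'' t‖ * Real.log (2 + ‖γ'' t‖) ^ g) (Set.Icc 0 L)) :
    ∃ C : ℝ, ∀ ξ : E2,
      ‖fourierInd (polarSet Ω) ξ‖ ≤ C * (1 + ‖ξ‖)⁻¹ * Real.log (2 + ‖ξ‖) ^ (-g) := by
  obtain ⟨r, hr, hball⟩ := Metric.isOpen_iff.1 hopen 0 h0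
  obtain ⟨ρ, hρ⟩ : ∃ ρ, ∀ y ∈ frontier Ω, ‖y‖ ≤ ρ :=
    (hbdd.closure.subset frontier_subset_closure).exists_norm_le
  have hKc : IsCompact (polarSet Ω) := polarSet_isCompact hr hball hbdd h0
  have hKv : Convex ℝ (polarSet Ω) := polarSet_convex hbdd h0
  have hmod := fun (M τ : ℝ) (hM : 0 ≤ M) (hτ : τ ≤ L) (s t : ℝ) (hst : |s - t| ≤ τ) =>
    tangent_modulus hbp hg hLlogL hM hτ s t hst
  obtain ⟨hL, hder, hcont, hunit, hper, himg, hinj, hii, hFTC⟩ := hbp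
  set A := ∫ t in Set.Icc 0 L, ‖γ'' t‖ * Real.log (2 + ‖γ'' t‖) ^ g with hA
  have hA0 : 0 ≤ A := integral_nonneg fun t => mul_nonneg (norm_nonneg _)
    (Real.rpow_nonneg (Real.log_nonneg (by linarith [norm_nonneg (γ'' t)])) _)
  have hsurj : ∀ y ∈ frontier Ω, ∃ t, γ t = y := by
    intro y hy
    rw [← himg] at hy
    obtain ⟨t, -, ht⟩ := hy
    exact ⟨t, ht⟩
  have hfr : ∀ t, γ t ∈ frontier Ω := by
    intro t
    obtain ⟨s, hs, hse⟩ := hper.exists_mem_Ico₀ hL t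
    rw [hse, ← himg]
    exact mem_image_of_mem _ hs
  have hρ0 : 0 ≤ ρ := (norm_nonneg _).trans (hρ _ (hfr 0))
  set c := 1 + 2 * ρ / r with hcdef
  have hc0 : 0 ≤ c := by positivity
  set P := 3 * (4 * g) ^ g with hP
  have hP0 : 0 ≤ P := by positivity
  set C₁ := 2 * c * (ρ * (2 * Real.pi) * P + 2 / r * (2 * (P + 4 ^ g * A))) with hC₁
  have hC₁0 : 0 ≤ C₁ := by positivity
  clear_value C₁ P A
  set R₀ := max 1 (L⁻¹ ^ 2) with hR₀
  have hR₀1 : 1 ≤ R₀ := le_max_left _ _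
  set V := volume.real (polarSet Ω) with hV
  have hV0 : 0 ≤ V := measureReal_nonneg
  have hlogR₀ : 0 < Real.log (2 + R₀) := Real.log_pos (by linarith)
  refine ⟨8 * Real.pi * C₁ + V * (1 + R₀) * Real.log (2 + R₀) ^ g, fun ξ => ?_⟩
  set R := ‖ξ‖ with hR
  have hRnn : 0 ≤ R := norm_nonneg ξ
  have hlogR : 0 < Real.log (2 + R) := Real.log_pos (by linarith)
  have hΛ : 0 < Real.log (2 + R) ^ (-g) := Real.rpow_pos_of_pos hlogR _
  have hR1 : 0 < (1 + R)⁻¹ := by positivity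
  rcases lt_or_ge R R₀ with hsmall | hbig
  · have h1 : ‖fourierInd (polarSet Ω) ξ‖ ≤ V := by
      have := norm_setIntegral_le_of_norm_le_const (μ := volume) (s := polarSet Ω)
        (f := fun x : E2 => Complex.exp (-Complex.I * (⟪x, ξ⟫ : ℝ))) (C := 1)
        hKc.measure_lt_top (fun x _ => by simp [Complex.norm_exp])
      rw [one_mul] at this
      exact this
    have h2 : 1 ≤ (1 + R₀) * (1 + R)⁻¹ := by
      rw [← div_eq_mul_inv, one_le_div (by linarith)]; linarith
    have h3 : 1 ≤ Real.log (2 + R₀) ^ g * Real.log (2 + R) ^ (-g) := by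
      rw [Real.rpow_neg hlogR.le, ← div_eq_mul_inv, one_le_div (Real.rpow_pos_of_pos hlogR _)]
      exact Real.rpow_le_rpow hlogR.le (Real.log_le_log (by linarith) (by linarith)) hg.le
    have h4 : V ≤ V * (((1 + R₀) * (1 + R)⁻¹) * (Real.log (2 + R₀) ^ g * Real.log (2 + R) ^ (-g))) :=
      le_mul_of_one_le_right hV0 (one_le_mul_of_one_le_of_one_le h2 h3)
    have h5 : 0 ≤ 8 * Real.pi * C₁ * (1 + R)⁻¹ * Real.log (2 + R) ^ (-g) :=
      mul_nonneg (mul_nonneg (mul_nonneg (by positivity) hC₁0) hR1.le) hΛ.le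
    calc ‖fourierInd (polarSet Ω) ξ‖ ≤ V := h1
      _ ≤ _ := h4
      _ ≤ _ := by linarith
  · have hRpos : 0 < R := by linarith
    -- `q = R^{1/4}` balances the arc length `τ = q⁻²` against the curvature threshold `q`.
    obtain ⟨q, hq1, hq4⟩ : ∃ q : ℝ, 1 ≤ q ∧ q ^ 4 = R := by
      refine ⟨√(√R), ?_, ?_⟩
      · rw [Real.one_le_sqrt, Real.one_le_sqrt]; linarith
      · rw [show 4 = 2 * 2 by norm_num, pow_mul, Real.sq_sqrt (Real.sqrt_nonneg _),
          Real.sq_sqrt hRnn]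
    have hq0 : 0 < q := by linarith
    set τ := 1 / q ^ 2 with hτ
    have hτ0 : 0 < τ := by positivity
    have hτL : τ ≤ L := by
      have h1 : L⁻¹ ^ 2 ≤ (q ^ 2) ^ 2 := by
        rw [← pow_mul, hq4]; exact (le_max_right _ _).trans hbig
      have h2 : L⁻¹ ≤ q ^ 2 := le_of_sq_le_sq h1 (by positivity)
      rw [hτ, one_div]
      exact inv_le_of_inv_le₀ hL h2
    set Λ := Real.log (2 + R) ^ (-g) with hΛdef
    have hPq : 1 / q ≤ P * Λ := by
      have := inv_le_log_rpow hq1 hg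
      rwa [hq4, ← hP] at this
    have hlq : Real.log (2 + q) ^ (-g) ≤ 4 ^ g * Λ := by
      have := log_two_add_rpow_le hq1 hg
      rwa [hq4] at this
    set ω := 2 * (q * τ + Real.log (2 + q) ^ (-g) * A) with hω
    have hlq0 : 0 ≤ Real.log (2 + q) ^ (-g) :=
      Real.rpow_nonneg (Real.log_nonneg (by linarith)) _
    have hω0 : 0 ≤ ω := by positivity
    have hωle : ω ≤ 2 * (P + 4 ^ g * A) * Λ := by
      have h1 : q * τ = 1 / q := by rw [hτ]; field_simp
      have h2 : Real.log (2 + q) ^ (-g) * A ≤ 4 ^ g * Λ * A := by gcongr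
      rw [hω, h1]
      linarith
    set h := Real.pi / R with hh
    have hh0 : 0 < h := by positivity
    have hδ : ρ * (2 * h) / τ ≤ ρ * (2 * Real.pi) * P * Λ := by
      have h1 : ρ * (2 * h) / τ = ρ * (2 * Real.pi) * (1 / q ^ 2) := by
        rw [hh, hτ, ← hq4]; field_simp
      have h2 : 1 / q ^ 2 ≤ 1 / q := by
        apply one_div_le_one_div_of_le hq0; nlinarith
      rw [h1, mul_assoc _ P]
      gcongr
      exact h2.trans hPq
    set W := 2 * c * (ρ * (2 * h) / τ + 2 / r * ω) with hW
    have hW0 : 0 ≤ W := by positivity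
    have hWle : W ≤ C₁ * Λ := by
      calc W ≤ 2 * c * (ρ * (2 * Real.pi) * P * Λ + 2 / r * (2 * (P + 4 ^ g * A) * Λ)) := by
            rw [hW]; gcongr
        _ = C₁ * Λ := by rw [hC₁]; ring
    obtain ⟨b, hb⟩ : ∃ b : OrthonormalBasis (Fin 2) ℝ E2, b 0 = R⁻¹ • ξ := by
      have hon : Orthonormal ℝ (({0} : Set (Fin 2)).domRestrict fun _ => R⁻¹ • ξ) := by
        refine ⟨fun i => ?_, fun i j hij => (hij (Subsingleton.elim i j)).elim⟩
        simp only [Set.domRestrict_apply]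
        rw [norm_smul, norm_inv, Real.norm_of_nonneg hRnn, ← hR, inv_mul_cancel₀ hRpos.ne']
      obtain ⟨b, hb⟩ := hon.exists_orthonormalBasis_extension_of_card_eq (by simp)
      exact ⟨b, hb 0 rfl⟩
    have hξ : ξ = R • b 0 := by rw [hb, smul_smul, mul_inv_cancel₀ hRpos.ne', one_smul]
    have hspan : ∀ x : E2, x = ⟪b 0, x⟫ • b 0 + ⟪b 1, x⟫ • b 1 := by
      intro x
      have := b.sum_repr' x
      rw [Fin.sum_univ_two] at this
      exact this.symm
    have hmodq := hmod q τ hq0.le hτL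
    obtain ⟨β, hβ, hβ', hβcap⟩ := polar_cap hconv hopen hr hball hbdd h0 hρ hder hunit hsurj hfr
      (b.norm_eq_one 0) (b.norm_eq_one 1) hspan
    obtain ⟨β₂, hβ₂, ⟨m₂, hm₂, hm₂'⟩, hβ₂cap⟩ := polar_cap hconv hopen hr hball hbdd h0 hρ hder
      hunit hsurj hfr (θ := -b 0) (by rw [norm_neg]; exact b.norm_eq_one 0) (b.norm_eq_one 1)
      (by simpa using hspan)
    simp only [inner_neg_left] at hβ₂ hm₂' hβ₂cap
    have hmain := norm_fourierInd_le_of_caps b hKc hKv (α := -β₂) (β := β) (R := R) (h := h)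
      (W := W) (fun x hx => by linarith [hβ₂ x hx]) ⟨m₂, hm₂, by linarith⟩ hβ hβ' hh0
      (by rw [hh]; field_simp) hW0 (by
        intro x hx y hy hxy hd
        rcases hd with hd | hd
        · exact hβ₂cap τ ω (2 * h) hτ0 hω0 (by positivity) hmodq x hx y hy (by rw [hxy])
            (by linarith)
        · exact hβcap τ ω (2 * h) hτ0 hω0 (by positivity) hmodq x hx y hy hxy hd)
    rw [← hξ] at hmain
    have hinv : R⁻¹ ≤ 2 * (1 + R)⁻¹ := by
      rw [← one_div, ← div_eq_mul_inv, div_le_div_iff₀ hRpos (by linarith)]; linarith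
    have h5 : 0 ≤ V * (1 + R₀) * Real.log (2 + R₀) ^ g * (1 + R)⁻¹ * Λ :=
      mul_nonneg (mul_nonneg (mul_nonneg (mul_nonneg hV0 (by linarith))
        (Real.rpow_nonneg hlogR₀.le _)) hR1.le) hΛ.le
    calc ‖fourierInd (polarSet Ω) ξ‖ ≤ 4 * h * W := hmain
      _ ≤ 4 * (Real.pi * (2 * (1 + R)⁻¹)) * (C₁ * Λ) := by
        rw [hh, div_eq_mul_inv]; gcongr
      _ ≤ _ := by linarith

end
end

section
/- Let Ω be a bounded open convex set in ℝ² containing the origin in its interior, satisfying sup_{θ∈S¹} sup_{δ>0} δ^{-1/2} μ(θ,δ) < ∞. Let 10 ≤ r ≤ R < ∞ and R^{1/2} ≤ h ≤ R. Let J be a closed line segment whose endpoints are in ℤ², let 𝕁 = J ∩ ℤ², and assume the ninefold concentric parallel dilate 9J is contained in the annulus 𝒜(r,h) = {x ∈ ℝ² : r ≤ ρ*(x) ≤ r + 1/h} and card(𝕁) ≥ 10. Let d be the (constant) distance between consecutive lattice points on J and set 𝒯 = R^{3/4} d^{1/2} h^{−1/2} r^{−1/4}. Then there is a constant C_Ω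 such that: √(Rr) Σ_{ℓ∈𝕁} μ(ℓ/|ℓ|, 1/(R|ℓ|)) ≤ C_Ω (Rr/(h²d²))^{1/4} if card(𝕁) ≤ 𝒯, and √(Rr) Σ_{ℓ∈𝕁} μ(ℓ/|ℓ|, 1/(R|ℓ|)) ≤ C_Ω (r·card(𝕁)/(h d²))^{1/3} if card(𝕁) ≥ 𝒯. -/
/-! Write the lattice points of `J` as `ℓ_j = p + j v`, `0 ≤ j < N`, where `v` is a primitive lattice
vector with `‖v‖ = d`, and let `f t = ρ*(p + t v)`. This is a convex function of `t` whose values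
on `[-N, 2N]` lie in `[r, r + 1/h]`.

A point `y` of the cap at `ℓ_j` satisfies `⟪y, ℓ_j⟫ ≥ f j - 1/R` and `⟪y, ℓ_k⟫ ≤ f k` for all `k`;
with `k = j ± m` this confines `⟪y, v⟫` to an interval of length
`(f (j+m) + f (j-m) - 2 f j) / m + 2 / (m R)`. Since `f` is almost constant, `v` is transversal to
`ℓ_j`, so the diameter of the cap is at most a constant times this length divided by `d`
(`capDiam_le`). The second differences telescope and convexity bounds the remaining increments
(`sum_second_diff_le`), so the caps have total diameter `≲ (m / (N h) + N / (m R)) / d`.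

Put `A = (R r / (h² d²))^{1/4}`. The choice `m = ⌈N √(h/R)⌉` yields
`√(R r) Σ μ ≲ A + A² / N` (`sqrt_mul_balance`), while the curvature hypothesis yields
`√(R r) Σ μ ≲ N`. Using the first for `N ≥ A` and the second for `N ≤ A` gives `√(R r) Σ μ ≲ A`
without any condition on `N`. Finally, `A` is at most `(r N / (h d²))^{1/3}` exactly when `N ≥ 𝒯`
(`bound_le_of_threshold`), which gives the second estimate.
-/

open MeasureTheory Set
open scoped Pointwise RealInnerProductSpace NNReal ENNReal Classical

noncomputable section

/-! ### The support function -/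

section facts
variable {Ω : Set E2}

lemma inner_le_suppFn (hbdd : Bornology.IsBounded Ω) {y : E2} (hy : y ∈ closure Ω) (ξ : E2) :
    ⟪y, ξ⟫ ≤ suppFn Ω ξ := by
  obtain ⟨M, hM⟩ := hbdd.exists_norm_le
  have hb : BddAbove ((fun x => ⟪x, ξ⟫) '' Ω) := by
    refine ⟨M * ‖ξ‖, ?_⟩
    rintro _ ⟨x, hx, rfl⟩
    exact (real_inner_le_norm x ξ).trans (by gcongr; exact hM x hx)
  have hcl : IsClosed {x : E2 | ⟪x, ξ⟫ ≤ suppFn Ω ξ} :=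
    isClosed_le (by fun_prop) continuous_const
  exact closure_minimal (fun x hx => le_csSup hb ⟨x, hx, rfl⟩) hcl hy

lemma suppFn_le_of_forall (h0 : (0 : E2) ∈ Ω) {ξ : E2} {c : ℝ}
    (h : ∀ x ∈ Ω, ⟪x, ξ⟫ ≤ c) : suppFn Ω ξ ≤ c := by
  refine csSup_le ⟨_, 0, h0, rfl⟩ ?_
  rintro _ ⟨x, hx, rfl⟩
  exact h x hx

lemma convexOn_suppFn_line (hbdd : Bornology.IsBounded Ω) (h0 : (0 : E2) ∈ Ω) (p v : E2) :
    ConvexOn ℝ univ (fun t : ℝ => suppFn Ω (p + t • v)) := by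
  refine ⟨convex_univ, ?_⟩
  intro s _ t _ a b ha hb hab
  refine suppFn_le_of_forall h0 fun x hx => ?_
  have h1 := inner_le_suppFn hbdd (subset_closure hx) (p + s • v)
  have h2 := inner_le_suppFn hbdd (subset_closure hx) (p + t • v)
  have h3 : ⟪x, p + (a • s + b • t) • v⟫ = a * ⟪x, p + s • v⟫ + b * ⟪x, p + t • v⟫ := by
    simp only [inner_add_right, real_inner_smul_right, smul_eq_mul]
    linear_combination (-⟪x, p⟫) * hab
  rw [h3]
  simp only [smul_eq_mul]
  gcongr

lemma suppFn_ge_of_ball (hbdd : Bornology.IsBounded Ω) {ε : ℝ} (hε : 0 < ε)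
    (hball : Metric.closedBall (0 : E2) ε ⊆ Ω) (ξ : E2) : ε * ‖ξ‖ ≤ suppFn Ω ξ := by
  by_cases hξ : ξ = 0
  · subst hξ
    have := inner_le_suppFn hbdd
      (subset_closure (hball (Metric.mem_closedBall_self hε.le))) (0 : E2)
    simpa using this
  · have hn : ‖ξ‖ ≠ 0 := norm_ne_zero_iff.2 hξ
    have hmem : (ε * ‖ξ‖⁻¹) • ξ ∈ Ω := by
      apply hball
      rw [mem_closedBall_zero_iff, norm_smul, Real.norm_eq_abs, abs_of_nonneg (by positivity),
        mul_assoc, inv_mul_cancel₀ hn, mul_one]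
    have := inner_le_suppFn hbdd (subset_closure hmem) ξ
    rw [real_inner_smul_left, real_inner_self_eq_norm_sq] at this
    calc ε * ‖ξ‖ = ε * ‖ξ‖⁻¹ * ‖ξ‖ ^ 2 := by field_simp
      _ ≤ _ := this

lemma suppFn_le_mul_norm (h0 : (0 : E2) ∈ Ω) {M : ℝ} (hM : ∀ x ∈ Ω, ‖x‖ ≤ M) (ξ : E2) :
    suppFn Ω ξ ≤ M * ‖ξ‖ :=
  suppFn_le_of_forall h0 fun x hx =>
    (real_inner_le_norm x ξ).trans (by gcongr; exact hM x hx)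

lemma suppFn_smul (hbdd : Bornology.IsBounded Ω) (h0 : (0 : E2) ∈ Ω) {c : ℝ} (hc : 0 < c)
    (ξ : E2) : suppFn Ω (c • ξ) = c * suppFn Ω ξ := by
  apply le_antisymm
  · refine suppFn_le_of_forall h0 fun x hx => ?_
    rw [real_inner_smul_right]
    exact mul_le_mul_of_nonneg_left (inner_le_suppFn hbdd (subset_closure hx) ξ) hc.le
  · rw [← le_div_iff₀' hc]
    refine suppFn_le_of_forall h0 fun x hx => ?_
    rw [le_div_iff₀' hc, ← real_inner_smul_right]
    exact inner_le_suppFn hbdd (subset_closure hx) _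

end facts

/-! ### Plane linear algebra -/

/-- The absolute value of the determinant of two plane vectors. -/
def absDet (ℓ v : E2) : ℝ := |ℓ 0 * v 1 - ℓ 1 * v 0|

/-- Cramer's rule: `det(ℓ, v) u` is the quarter turn of `⟪u, ℓ⟫ v - ⟪u, v⟫ ℓ`, up to sign. -/
lemma cramer_norm (ℓ v u : E2) : ‖u‖ * absDet ℓ v = ‖⟪u, ℓ⟫ • v - ⟪u, v⟫ • ℓ‖ := by
  rw [← sq_eq_sq₀ (by unfold absDet; positivity) (norm_nonneg _), mul_pow, absDet, sq_abs,
    EuclideanSpace.norm_sq_eq, EuclideanSpace.norm_sq_eq]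
  simp only [Fin.sum_univ_two, Real.norm_eq_abs, sq_abs, PiLp.sub_apply, PiLp.smul_apply,
    smul_eq_mul, PiLp.inner_apply, RCLike.inner_apply, conj_trivial]
  ring

lemma norm_mul_absDet_le (ℓ v u : E2) :
    ‖u‖ * absDet ℓ v ≤ |⟪u, ℓ⟫| * ‖v‖ + |⟪u, v⟫| * ‖ℓ‖ := by
  rw [cramer_norm]
  refine (norm_sub_le _ _).trans ?_
  rw [norm_smul, norm_smul, Real.norm_eq_abs, Real.norm_eq_abs]

lemma inner_mul_norm_le (ℓ v u : E2) :
    |⟪u, ℓ⟫| * ‖v‖ ≤ ‖u‖ * absDet ℓ v + |⟪u, v⟫| * ‖ℓ‖ := by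
  rw [cramer_norm]
  have := norm_sub_norm_le (⟪u, ℓ⟫ • v) (⟪u, v⟫ • ℓ)
  rw [norm_smul, norm_smul, Real.norm_eq_abs, Real.norm_eq_abs] at this
  linarith

/-! ### Second differences of convex functions -/

/-- A convex function that increases by at most `q` from `x` to `x + s * N` increases by at most
`q * m / N` from `x` to `x + s * m`, for `0 ≤ m ≤ N`. -/
lemma convex_increment_le {f : ℝ → ℝ} (hf : ConvexOn ℝ univ f) {N m q x s : ℝ} (hN : 0 < N)
    (hm : 0 ≤ m) (hmN : m ≤ N) (h : f (x + s * N) - f x ≤ q) :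
    f (x + s * m) - f x ≤ q * m / N := by
  have h1 := hf.2 (mem_univ x) (mem_univ (x + s * N))
    (show 0 ≤ 1 - m / N by rw [sub_nonneg, div_le_one hN]; exact hmN)
    (show 0 ≤ m / N by positivity) (by ring)
  have h2 : (1 - m / N) • x + (m / N) • (x + s * N) = x + s * m := by
    simp only [smul_eq_mul]; field_simp; ring
  rw [h2] at h1
  simp only [smul_eq_mul] at h1
  have h3 : m / N * (f (x + s * N) - f x) ≤ m / N * q := by gcongr
  calc f (x + s * m) - f x ≤ m / N * (f (x + s * N) - f x) := by linarith
    _ ≤ _ := h3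
    _ = _ := by ring

lemma sum_shift_sub (f : ℝ → ℝ) (N m : ℕ) (c : ℝ) :
    ∑ j ∈ Finset.range N, (f (c + j + m) - f (c + j)) =
      ∑ i ∈ Finset.range m, (f (c + N + i) - f (c + i)) := by
  induction N with
  | zero => simp
  | succ n ih =>
    rw [Finset.sum_range_succ, ih]
    have := Finset.sum_range_sub (fun i : ℕ => f (c + n + i)) m
    simp only [Nat.cast_zero, add_zero] at this
    rw [← this, ← Finset.sum_add_distrib]
    refine Finset.sum_congr rfl fun i _ => ?_
    push_cast
    rw [show c + (n + 1 : ℝ) + i = c + n + (i + 1) by ring]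
    ring

/-- Second differences with step `m` of a convex function almost constant on a long interval
telescope to a quantity quadratic in `m`. -/
lemma sum_second_diff_le {f : ℝ → ℝ} (hf : ConvexOn ℝ univ f) {N m : ℕ} (hm : 1 ≤ m)
    (hmN : m ≤ N) {r q : ℝ} (hq : ∀ t : ℝ, -N ≤ t → t ≤ 2 * N → r ≤ f t ∧ f t ≤ r + q) :
    ∑ j ∈ Finset.range N, (f (j + m) + f (j - m) - 2 * f j) ≤ 2 * q * m ^ 2 / N := by
  have hN : (0 : ℝ) < N := by exact_mod_cast (by omega : 0 < N)
  have hmN' : (m : ℝ) ≤ N := by exact_mod_cast hmN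
  have h1 := sum_shift_sub f N m 0
  have h2 := sum_shift_sub f N m (-m)
  have h3 : ∑ j ∈ Finset.range N, (f (j + m) + f (j - m) - 2 * f j) =
      ∑ j ∈ Finset.range N, (f (0 + j + m) - f (0 + j)) -
        ∑ j ∈ Finset.range N, (f (-m + j + m) - f (-m + j)) := by
    rw [← Finset.sum_sub_distrib]
    refine Finset.sum_congr rfl fun j _ => ?_
    rw [show (0 : ℝ) + j + m = j + m by ring, show (0 : ℝ) + j = j by ring,
      show (-m + j + m : ℝ) = j by ring, show (-m + j : ℝ) = j - m by ring]
    ring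
  rw [h3, h1, h2, ← Finset.sum_sub_distrib]
  have h4 : ∀ i ∈ Finset.range m, (f (0 + N + i) - f (0 + i)) - (f (-m + N + i) - f (-m + i)) ≤
      2 * q * m / N := by
    intro i hi
    have hi' : (i : ℝ) < m := by exact_mod_cast Finset.mem_range.1 hi
    have hi0 : (0 : ℝ) ≤ i := by positivity
    have a1 := convex_increment_le hf (x := -m + N + i) (s := 1) (q := q) hN (by positivity) hmN'
      (by
        have := (hq (-m + N + i + 1 * N) (by linarith) (by linarith)).2
        have := (hq (-m + N + i) (by linarith) (by linarith)).1
        linarith)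
    have a2 := convex_increment_le hf (x := i) (s := -1) (q := q) hN (by positivity) hmN'
      (by
        have := (hq (i + -1 * N) (by linarith) (by linarith)).2
        have := (hq i (by linarith) (by linarith)).1
        linarith)
    rw [show (-m + N + i + 1 * m : ℝ) = 0 + N + i by ring] at a1
    rw [show (i + -1 * m : ℝ) = -m + i by ring] at a2
    rw [show (0 : ℝ) + (i : ℝ) = i by ring]
    have : 2 * q * m / N = q * m / N + q * m / N := by ring
    linarith
  refine (Finset.sum_le_card_nsmul _ _ _ h4).trans (le_of_eq ?_)
  simp only [Finset.card_range, nsmul_eq_mul]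
  ring

/-! ### Lattice points on a segment -/

lemma ek_apply (k : Fin 2 → ℤ) (i : Fin 2) : ek k i = k i := rfl

/-- The lattice points of a segment are the equally spaced points `P + j g`, `0 ≤ j ≤ n`, where
`g` is `Q - P` divided by the gcd `n` of its coordinates. -/
lemma exists_step (P Q : Fin 2 → ℤ) (hPQ : P ≠ Q) :
    ∃ (g : Fin 2 → ℤ) (n : ℕ), g ≠ 0 ∧ Q = P + n • g ∧
      ∀ k, ek k ∈ segment ℝ (ek P) (ek Q) ↔ ∃ j ∈ Finset.range (n + 1), k = P + j • g := by
  set n : ℕ := Int.gcd (Q 0 - P 0) (Q 1 - P 1) with hn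
  have hn0 : 0 < n := by
    rw [hn, Int.gcd_pos_iff]
    by_contra! hcon
    apply hPQ
    funext i
    fin_cases i
    · simp only [Fin.zero_eta]; omega
    · simp only [Fin.mk_one]; omega
  obtain ⟨a, ha⟩ : (n : ℤ) ∣ Q 0 - P 0 := Int.gcd_dvd_left ..
  obtain ⟨b, hb⟩ : (n : ℤ) ∣ Q 1 - P 1 := Int.gcd_dvd_right ..
  have hnZ : (n : ℤ) ≠ 0 := by exact_mod_cast hn0.ne'
  obtain ⟨u, w, huw⟩ : ∃ u w : ℤ, a * u + b * w = 1 := by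
    refine ⟨Int.gcdA (Q 0 - P 0) (Q 1 - P 1), Int.gcdB (Q 0 - P 0) (Q 1 - P 1), ?_⟩
    have h1 := Int.gcd_eq_gcd_ab (Q 0 - P 0) (Q 1 - P 1)
    apply mul_left_cancel₀ hnZ
    rw [← hn] at h1
    linear_combination (-1 : ℤ) * h1 - Int.gcdA (Q 0 - P 0) (Q 1 - P 1) * ha -
      Int.gcdB (Q 0 - P 0) (Q 1 - P 1) * hb
  have hnR : (0 : ℝ) < n := by exact_mod_cast hn0
  have haR : (Q 0 : ℝ) - P 0 = n * a := by exact_mod_cast ha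
  have hbR : (Q 1 : ℝ) - P 1 = n * b := by exact_mod_cast hb
  have huwR : (a : ℝ) * u + b * w = 1 := by exact_mod_cast huw
  refine ⟨![a, b], n, ?_, ?_, ?_⟩
  · intro h
    have h1 : a = 0 := by simpa using congrFun h 0
    have h2 : b = 0 := by simpa using congrFun h 1
    simp [h1, h2] at huw
  · funext i
    fin_cases i
    · simp; linarith
    · simp; linarith
  · intro k
    rw [segment_eq_image', mem_image]
    constructor
    · rintro ⟨t, ⟨ht0, ht1⟩, hk⟩
      have k0 : (P 0 : ℝ) + t * (n * a) = k 0 := by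
        rw [← haR]; simpa [ek_apply] using congrArg (fun x : E2 => x 0) hk
      have k1 : (P 1 : ℝ) + t * (n * b) = k 1 := by
        rw [← hbR]; simpa [ek_apply] using congrArg (fun x : E2 => x 1) hk
      -- Bézout: `t * n` is an integer because `a` and `b` are coprime.
      set z : ℤ := (k 0 - P 0) * u + (k 1 - P 1) * w with hz
      have hzt : (z : ℝ) = t * n := by
        rw [hz]; push_cast
        linear_combination (-(u : ℝ)) * k0 - w * k1 + t * n * huwR
      have hz0 : 0 ≤ z := by
        have : (0 : ℝ) ≤ z := by rw [hzt]; positivity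
        exact_mod_cast this
      have hzn : z ≤ n := by
        have : (z : ℝ) ≤ n := by rw [hzt]; nlinarith
        exact_mod_cast this
      lift z to ℕ using hz0 with j hj
      refine ⟨j, by simp; omega, ?_⟩
      have hzt' : (j : ℝ) = t * n := by simpa using hzt
      funext i
      fin_cases i
      · simp only [Fin.zero_eta, Pi.add_apply, nsmul_eq_mul]
        have : (k 0 : ℝ) = P 0 + j * a := by rw [← k0, hzt']; ring
        exact_mod_cast this
      · simp only [Fin.mk_one, Pi.add_apply, nsmul_eq_mul]
        have : (k 1 : ℝ) = P 1 + j * b := by rw [← k1, hzt']; ring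
        exact_mod_cast this
    · rintro ⟨j, hj, rfl⟩
      have hj' : (j : ℝ) ≤ n := by
        have := Finset.mem_range.1 hj
        exact_mod_cast (by omega : j ≤ n)
      refine ⟨j / n, ⟨by positivity, by rw [div_le_one hnR]; exact hj'⟩, ?_⟩
      ext i
      fin_cases i
      · simp [ek_apply, haR]; field_simp; rfl
      · simp [ek_apply, hbR]; field_simp; rfl

/-! ### The diameter of a cap -/

set_option maxHeartbeats 1000000 in
/-- Each cap is controlled by a second difference of the support function along the line of `J`.
A point `y` of the cap at `ℓ = p + j v` satisfies `⟪y, p + k v⟫ ≤ f k` for all `k`, and taking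
`k = j ± m` confines `⟪y, v⟫` to an interval whose length is the parenthesis on the right.
For `h ≥ 2 / ε` the vectors `ℓ` and `v` are uniformly transversal, so this width controls the
diameter; for `h < 2 / ε` all the parameters are bounded and the estimate is trivial. -/
lemma capDiam_le {Ω : Set E2} (hbdd : Bornology.IsBounded Ω) (h0 : (0 : E2) ∈ Ω) {ε M : ℝ}
    (hε : 0 < ε) (hball : Metric.closedBall (0 : E2) ε ⊆ Ω) (hM0 : 0 < M)
    (hM : ∀ x ∈ closure Ω, ‖x‖ ≤ M) {r R h : ℝ} (hr : 10 ≤ r) (hrR : r ≤ R)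
    (hRh : Real.sqrt R ≤ h) (hhR : h ≤ R) {p v : E2} (hv : 1 ≤ ‖v‖) {f : ℝ → ℝ}
    (hfdef : ∀ t, f t = suppFn Ω (p + t • v)) {N : ℕ} (hN : 10 ≤ N)
    (hann : ∀ t : ℝ, -N ≤ t → t ≤ 2 * N → r ≤ f t ∧ f t ≤ r + 1 / h)
    {j m : ℕ} (hj : j < N) (hm : 1 ≤ m) (hmN : m ≤ N) :
    capDiam Ω (‖p + (j : ℝ) • v‖⁻¹ • (p + (j : ℝ) • v)) (1 / (R * ‖p + (j : ℝ) • v‖)) ≤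
      (16 * M / ε + 64 * M / ε ^ 5) *
        (((f (j + m) + f (j - m) - 2 * f j) / m + 2 / (m * R)) / ‖v‖) := by
  have hr0 : 0 < r := by linarith
  have hR0 : 0 < R := by linarith
  have hh3 : 3 ≤ h := le_trans (Real.le_sqrt_of_sq_le (by linarith)) hRh
  have hh0 : 0 < h := by linarith
  have hRh2 : R ≤ h ^ 2 := by
    have := Real.sq_sqrt hR0.le
    have h2 : Real.sqrt R ^ 2 ≤ h ^ 2 := by gcongr
    linarith
  have hv0 : 0 < ‖v‖ := by linarith
  have hm0 : (0 : ℝ) < m := by exact_mod_cast hm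
  have hmN' : (m : ℝ) ≤ N := by exact_mod_cast hmN
  have hjN : (j : ℝ) < N := by exact_mod_cast hj
  have hj0 : (0 : ℝ) ≤ j := by positivity
  have hN10 : (10 : ℝ) ≤ N := by exact_mod_cast hN
  have hh1 : 1 / h ≤ 1 := by rw [div_le_one hh0]; linarith
  have hRinv : 1 / R ≤ 1 / h := one_div_le_one_div_of_le hh0 hhR
  have hnorm : ∀ t : ℝ, -N ≤ t → t ≤ 2 * N → ‖p + t • v‖ ≤ 2 * r / ε := by
    intro t h1 h2
    have h3 := suppFn_ge_of_ball hbdd hε hball (p + t • v)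
    have h4 := (hann t h1 h2).2
    rw [← hfdef] at h3
    rw [le_div_iff₀ hε]
    linarith
  have hNv : N * ‖v‖ ≤ 4 * r / ε := by
    have h1 := hnorm 0 (by linarith) (by linarith)
    have h2 := hnorm N (by linarith) (by linarith)
    have h3 : (N : ℝ) * ‖v‖ = ‖(p + (N : ℝ) • v) - (p + (0 : ℝ) • v)‖ := by
      rw [show (p + (N : ℝ) • v) - (p + (0 : ℝ) • v) = (N : ℝ) • v by module, norm_smul,
        Real.norm_eq_abs, Nat.abs_cast]
    rw [h3]
    have h4 := norm_sub_le (p + (N : ℝ) • v) (p + (0 : ℝ) • v)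
    have : 4 * r / ε = 2 * r / ε + 2 * r / ε := by ring
    linarith
  have hmv : m * ‖v‖ ≤ 4 * r / ε := le_trans (by gcongr) hNv
  set ℓ : E2 := p + (j : ℝ) • v with hℓ
  set D : ℝ := (f (j + m) + f (j - m) - 2 * f j) / m + 2 / (m * R) with hD
  have hmid : 0 ≤ f (j + m) + f (j - m) - 2 * f j := by
    have hf : ConvexOn ℝ univ f := by
      have : f = fun t => suppFn Ω (p + t • v) := funext hfdef
      rw [this]; exact convexOn_suppFn_line hbdd h0 p v
    have h1 := hf.2 (mem_univ (j + m : ℝ)) (mem_univ (j - m : ℝ))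
      (show (0 : ℝ) ≤ 1 / 2 by norm_num) (show (0 : ℝ) ≤ 1 / 2 by norm_num) (by norm_num)
    simp only [smul_eq_mul] at h1
    rw [show (1 / 2 * (j + m) + 1 / 2 * (j - m) : ℝ) = j by ring] at h1
    linarith
  have hDge : 2 / (m * R) ≤ D := by
    have : 0 ≤ (f (j + m) + f (j - m) - 2 * f j) / m := by positivity
    linarith
  have hD0 : 0 < D := lt_of_lt_of_le (by positivity) hDge
  -- `m ‖v‖ ≲ r`, so `1 / (r R)` is dominated by the width.
  have hDv : ε / (2 * (r * R)) ≤ D / ‖v‖ := by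
    rw [le_div_iff₀ hε] at hmv
    calc ε / (2 * (r * R)) ≤ 2 / (m * R) / ‖v‖ := by
          rw [div_div, div_le_div_iff₀ (by positivity) (by positivity)]
          nlinarith
      _ ≤ _ := by gcongr
  have hfj : f j = suppFn Ω ℓ := hfdef j
  have hℓr : r ≤ suppFn Ω ℓ := by rw [← hfj]; exact (hann j (by linarith) (by linarith)).1
  have hℓ0 : 0 < ‖ℓ‖ := by
    have h1 := suppFn_le_mul_norm h0 (fun x hx => hM x (subset_closure hx)) ℓ
    by_contra hcon
    have : ‖ℓ‖ = 0 := le_antisymm (not_lt.1 hcon) (norm_nonneg _)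
    rw [this] at h1
    linarith
  have hℓ2 : ‖ℓ‖ ≤ 2 * r / ε := hnorm j (by linarith) (by linarith)
  refine Metric.diam_le_of_forall_dist_le (by positivity) ?_
  have key : ∀ y ∈ {x ∈ frontier Ω | suppFn Ω (‖ℓ‖⁻¹ • ℓ) - 1 / (R * ‖ℓ‖) ≤
      ⟪x, ‖ℓ‖⁻¹ • ℓ⟫}, y ∈ closure Ω ∧ f j - 1 / R ≤ ⟪y, ℓ⟫ ∧ ⟪y, ℓ⟫ ≤ f j := by
    rintro y ⟨hy, hy2⟩
    have hyc := frontier_subset_closure hy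
    refine ⟨hyc, ?_, by rw [hfj]; exact inner_le_suppFn hbdd hyc ℓ⟩
    rw [suppFn_smul hbdd h0 (inv_pos.2 hℓ0), real_inner_smul_right, ← hfj] at hy2
    have := mul_le_mul_of_nonneg_left hy2 hℓ0.le
    have e1 : ‖ℓ‖ * (‖ℓ‖⁻¹ * f j - 1 / (R * ‖ℓ‖)) = f j - 1 / R := by field_simp
    have e2 : ‖ℓ‖ * (‖ℓ‖⁻¹ * ⟪y, ℓ⟫) = ⟪y, ℓ⟫ := by field_simp
    rwa [e1, e2] at this
  -- The value at `p + (j + s) v` bounds `s ⟪y, v⟫` for every `y` in the cap.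
  have slope : ∀ y ∈ closure Ω, f j - 1 / R ≤ ⟪y, ℓ⟫ → ∀ s : ℝ,
      s * ⟪y, v⟫ ≤ f (j + s) - f j + 1 / R := by
    intro y hy h1 s
    have h2 := inner_le_suppFn hbdd hy (p + ((j : ℝ) + s) • v)
    rw [← hfdef, show p + ((j : ℝ) + s) • v = ℓ + s • v by rw [hℓ]; module, inner_add_right,
      real_inner_smul_right] at h2
    linarith
  intro y hy z hz
  obtain ⟨hyc, hy1, hy2⟩ := key y hy
  obtain ⟨hzc, hz1, hz2⟩ := key z hz
  have hdist : dist y z ≤ 2 * M := by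
    rw [dist_eq_norm]
    linarith [norm_sub_le y z, hM y hyc, hM z hzc]
  rcases lt_or_ge h (2 / ε) with hsmall | hlarge
  · have hR4 : R ≤ 4 / ε ^ 2 := by
      calc R ≤ h ^ 2 := hRh2
        _ ≤ (2 / ε) ^ 2 := by gcongr
        _ = _ := by ring
    have hrR2 : r * R ≤ 16 / ε ^ 4 := by
      calc r * R ≤ (4 / ε ^ 2) * (4 / ε ^ 2) := by gcongr; linarith
        _ = _ := by ring
    have hlow : ε ^ 5 / 32 ≤ D / ‖v‖ := by
      refine le_trans ?_ hDv
      calc ε ^ 5 / 32 = ε / (2 * (16 / ε ^ 4)) := by field_simp; ring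
        _ ≤ _ := by gcongr
    calc dist y z ≤ 2 * M := hdist
      _ = 64 * M / ε ^ 5 * (ε ^ 5 / 32) := by field_simp; ring
      _ ≤ 64 * M / ε ^ 5 * (D / ‖v‖) := by gcongr
      _ ≤ _ := by gcongr; linarith [show 0 < 16 * M / ε by positivity]
  · -- Transversality: the slope `⟪y, v⟫` is small, hence `|det(ℓ, v)| ≳ r ‖v‖`.
    have hyv : |⟪y, v⟫| ≤ 2 / (10 * h) := by
      have a1 := slope y hyc hy1 N
      have a2 := slope y hyc hy1 (-N)
      have b1 := (hann (j + N) (by linarith) (by linarith)).2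
      have b2 := (hann (j + -N) (by linarith) (by linarith)).2
      have b3 := (hann j (by linarith) (by linarith)).1
      have a3 : N * |⟪y, v⟫| ≤ 2 * (1 / h) := by
        rw [← Nat.abs_cast N, ← abs_mul, abs_le]
        constructor <;> linarith
      have a4 : 10 * |⟪y, v⟫| ≤ 2 * (1 / h) := le_trans (by gcongr) a3
      calc |⟪y, v⟫| ≤ 2 * (1 / h) / 10 := by linarith
        _ = _ := by field_simp
    have hdet : r * ‖v‖ / (4 * M) ≤ absDet ℓ v := by
      have c1 := inner_mul_norm_le ℓ v y
      have c2 : r / 2 ≤ |⟪y, ℓ⟫| := by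
        refine le_trans ?_ (le_abs_self _)
        linarith
      have c3 : ‖y‖ * absDet ℓ v ≤ M * absDet ℓ v := by
        have : 0 ≤ absDet ℓ v := abs_nonneg _
        gcongr
        exact hM y hyc
      have c4 : |⟪y, v⟫| * ‖ℓ‖ ≤ r / 4 := by
        rw [div_le_iff₀ hε] at hlarge
        calc |⟪y, v⟫| * ‖ℓ‖ ≤ 2 / (10 * h) * (2 * r / ε) := by gcongr
          _ = 2 * r / (5 * (h * ε)) := by field_simp; ring
          _ ≤ 2 * r / (5 * 2) := by gcongr
          _ ≤ r / 4 := by linarith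
      have c5 : r / 2 * ‖v‖ ≤ |⟪y, ℓ⟫| * ‖v‖ := by gcongr
      have c6 : r / 4 ≤ r / 4 * ‖v‖ := by nlinarith
      rw [div_le_iff₀ (by positivity)]
      linarith
    have hu1 : |⟪y - z, ℓ⟫| ≤ 1 / R := by
      rw [inner_sub_left, abs_le]
      constructor <;> linarith
    have hu2 : |⟪y - z, v⟫| ≤ D := by
      have a1 := slope y hyc hy1 m
      have a2 := slope y hyc hy1 (-m)
      have a3 := slope z hzc hz1 m
      have a4 := slope z hzc hz1 (-m)
      rw [← sub_eq_add_neg] at a2 a4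
      have e : m * D = f (j + m) + f (j - m) - 2 * f j + 2 * (1 / R) := by
        rw [hD]; field_simp
      have : m * |⟪y - z, v⟫| ≤ m * D := by
        rw [e, ← Nat.abs_cast m, ← abs_mul, abs_le, Nat.abs_cast, inner_sub_left]
        constructor <;> linarith
      exact le_of_mul_le_mul_left this hm0
    have hfin := norm_mul_absDet_le ℓ v (y - z)
    have hfin2 : ‖y - z‖ * (r * ‖v‖ / (4 * M)) ≤ 1 / R * ‖v‖ + D * (2 * r / ε) :=
      calc ‖y - z‖ * (r * ‖v‖ / (4 * M)) ≤ ‖y - z‖ * absDet ℓ v := by gcongr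
        _ ≤ _ := hfin
        _ ≤ _ := by gcongr
    rw [← le_div_iff₀ (by positivity)] at hfin2
    rw [dist_eq_norm]
    calc ‖y - z‖ ≤ _ := hfin2
      _ = 8 * M / ε * (ε / (2 * (r * R))) + 8 * M / ε * (D / ‖v‖) := by field_simp; ring
      _ ≤ 8 * M / ε * (D / ‖v‖) + 8 * M / ε * (D / ‖v‖) := by gcongr
      _ = 16 * M / ε * (D / ‖v‖) := by ring
      _ ≤ _ := by gcongr; linarith [show 0 < 64 * M / ε ^ 5 by positivity]

/-! ### Numerical estimates -/

/-- The choice `m = ⌈N √(h / R)⌉` balances `m / (N h)` against `N / (m R)`. -/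
lemma sqrt_mul_balance {r R h d : ℝ} (hr : 0 < r) (hrR : r ≤ R) (hh : 0 < h) (hhR : h ≤ R)
    (hd : 1 ≤ d) {N : ℕ} (hN : 0 < N) {A : ℝ} (hA : 0 < A)
    (hA2 : A ^ 2 = Real.sqrt (R * r) / (h * d)) :
    ∃ m : ℕ, 1 ≤ m ∧ m ≤ N ∧
      Real.sqrt (R * r) * ((2 * (1 / h) * m / N + 2 * N / (m * R)) / d) ≤
        4 * A + 2 * (A ^ 2 / N) := by
  have hR : 0 < R := by linarith
  have hd0 : 0 < d := by linarith
  have hNR : (0 : ℝ) < N := by exact_mod_cast hN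
  set s : ℝ := Real.sqrt (h / R) with hs
  have hs0 : 0 < s := Real.sqrt_pos.2 (by positivity)
  have hs2 : s ^ 2 = h / R := Real.sq_sqrt (by positivity)
  have hs1 : s ≤ 1 := by exact Real.sqrt_le_one.2 ((div_le_one hR).2 hhR)
  have hm1 : 1 ≤ ⌈N * s⌉₊ := Nat.one_le_iff_ne_zero.2 (Nat.ceil_pos.2 (by positivity)).ne'
  refine ⟨⌈N * s⌉₊, hm1, Nat.ceil_le.2 (by nlinarith), ?_⟩
  set m : ℕ := ⌈N * s⌉₊
  have hm0 : (0 : ℝ) < m := by exact_mod_cast hm1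
  have hge : N * s ≤ m := Nat.le_ceil _
  have hlt : (m : ℝ) ≤ N * s + 1 := (Nat.ceil_lt_add_one (by positivity)).le
  set S : ℝ := Real.sqrt (R * r) with hS
  have hS0 : 0 < S := Real.sqrt_pos.2 (by positivity)
  have hS2 : S ^ 2 = R * r := Real.sq_sqrt (by positivity)
  have b1 : 2 * (1 / h) * m / N ≤ 2 * s / h + 2 / (N * h) := by
    calc 2 * (1 / h) * m / N ≤ 2 * (1 / h) * (N * s + 1) / N := by gcongr
      _ = _ := by field_simp
  have b2 : 2 * N / (m * R) ≤ 2 * s / h := by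
    calc 2 * N / (m * R) ≤ 2 * N / (N * s * R) := by gcongr
      _ = 2 * s / (s ^ 2 * R) := by field_simp
      _ = _ := by rw [hs2]; field_simp
  have b3 : S * (s / h) / d ≤ A := by
    have h1 : S * s / h / d ≤ A := by
      rw [← sq_le_sq₀ (by positivity) hA.le, hA2]
      have e : (S * s / h / d) ^ 2 = S * (S / (R * d)) / (h * d) := by
        calc (S * s / h / d) ^ 2 = S ^ 2 * s ^ 2 / h ^ 2 / d ^ 2 := by ring
          _ = _ := by rw [hs2]; field_simp
      rw [e]
      have hSR : S ≤ R := by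
        rw [hS]; apply Real.sqrt_le_iff.2 ⟨hR.le, by nlinarith⟩
      have : S / (R * d) ≤ 1 := by
        rw [div_le_one (by positivity)]; nlinarith
      gcongr
      nlinarith
    calc S * (s / h) / d = S * s / h / d := by ring
      _ ≤ A := h1
  calc S * ((2 * (1 / h) * m / N + 2 * N / (m * R)) / d)
      ≤ S * ((2 * s / h + 2 / (N * h) + 2 * s / h) / d) := by gcongr
    _ = 4 * (S * (s / h) / d) + 2 * (S / (h * d) / N) := by field_simp; ring
    _ ≤ _ := by rw [← hA2]; gcongr

/-- Beyond the threshold `𝒯` the second bound dominates the first. -/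
lemma bound_le_of_threshold {r R h d N : ℝ} (hr : 0 < r) (hR : 0 < R) (hh : 0 < h) (hd : 0 < d)
    (hN : 0 ≤ N)
    (hT : R ^ ((3 : ℝ) / 4) * d ^ ((1 : ℝ) / 2) * h ^ (-(1 : ℝ) / 2) * r ^ (-(1 : ℝ) / 4) ≤ N) :
    (R * r / (h ^ 2 * d ^ 2)) ^ ((1 : ℝ) / 4) ≤ (r * N / (h * d ^ 2)) ^ ((1 : ℝ) / 3) := by
  have hB : 0 ≤ r * N / (h * d ^ 2) := by positivity
  have e : (R * r / (h ^ 2 * d ^ 2)) ^ ((1 : ℝ) / 4) =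
      ((R * r / (h ^ 2 * d ^ 2)) ^ ((3 : ℝ) / 4)) ^ ((1 : ℝ) / 3) := by
    rw [← Real.rpow_mul (by positivity)]; norm_num
  rw [e]
  refine Real.rpow_le_rpow (by positivity) ?_ (by norm_num)
  have e2 : (R * r / (h ^ 2 * d ^ 2)) ^ ((3 : ℝ) / 4) =
      r * (R ^ ((3 : ℝ) / 4) * d ^ ((1 : ℝ) / 2) * h ^ (-(1 : ℝ) / 2) * r ^ (-(1 : ℝ) / 4)) /
        (h * d ^ 2) := by
    rw [← Real.exp_log hr, ← Real.exp_log hR, ← Real.exp_log hh, ← Real.exp_log hd]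
    simp only [← Real.exp_mul, ← Real.exp_add, ← Real.exp_sub, ← Real.exp_nat_mul]
    congr 1
    push_cast
    ring
  rw [e2]
  gcongr

/-- Lemma 6.1: let `Ω` be a bounded open convex planar domain containing
the origin with curvature bounded below in the generalized sense. Let `10 ≤ r ≤ R`,
`√R ≤ h ≤ R`, and let `J` be a closed segment with endpoints `P ≠ Q` in `ℤ²` whose ninefold
concentric dilate `9J` (the segment from `5P−4Q` to `5Q−4P`) lies in the annulus
`𝒜(r,h) = {r ≤ ρ* ≤ r + 1/h}`, containing at least `10` lattice points.  With
`d = |J|/(card 𝕁 − 1)` the spacing of lattice points on `J` and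
`𝒯 = R^{3/4} d^{1/2} h^{−1/2} r^{−1/4}`, one has
`√(Rr) Σ_{ℓ∈𝕁} μ(ℓ/|ℓ|, 1/(R|ℓ|)) ≤ C_Ω (Rr/(h²d²))^{1/4}` if `card 𝕁 ≤ 𝒯` and
`≤ C_Ω (r·card 𝕁/(hd²))^{1/3}` if `card 𝕁 ≥ 𝒯`. -/
theorem statement11 (Ω : Set E2) (hconv : Convex ℝ Ω) (hopen : IsOpen Ω)
    (hbdd : Bornology.IsBounded Ω) (h0 : (0 : E2) ∈ Ω) (hcurv : CurvBddBelow Ω) :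
    ∃ C : ℝ, ∀ r R h : ℝ, 10 ≤ r → r ≤ R → Real.sqrt R ≤ h → h ≤ R →
      ∀ P Q : Fin 2 → ℤ, P ≠ Q →
      segment ℝ ((5 : ℝ) • ek P - (4 : ℝ) • ek Q) ((5 : ℝ) • ek Q - (4 : ℝ) • ek P) ⊆
        {x : E2 | r ≤ suppFn Ω x ∧ suppFn Ω x ≤ r + 1 / h} →
      ∀ NJ : ℕ, NJ = Nat.card {k : Fin 2 → ℤ | ek k ∈ segment ℝ (ek P) (ek Q)} →
      10 ≤ NJ →
      ∀ d : ℝ, d = dist (ek P) (ek Q) / ((NJ : ℝ) - 1) →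
      (((NJ : ℝ) ≤ R ^ ((3 : ℝ) / 4) * d ^ ((1 : ℝ) / 2) * h ^ (-(1 : ℝ) / 2) *
            r ^ (-(1 : ℝ) / 4) →
          Real.sqrt (R * r) *
              (∑' k : Fin 2 → ℤ, if ek k ∈ segment ℝ (ek P) (ek Q) then
                capDiam Ω ((‖ek k‖)⁻¹ • ek k) (1 / (R * ‖ek k‖)) else 0) ≤
            C * (R * r / (h ^ 2 * d ^ 2)) ^ ((1 : ℝ) / 4)) ∧
        (R ^ ((3 : ℝ) / 4) * d ^ ((1 : ℝ) / 2) * h ^ (-(1 : ℝ) / 2) * r ^ (-(1 : ℝ) / 4) ≤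
            (NJ : ℝ) →
          Real.sqrt (R * r) *
              (∑' k : Fin 2 → ℤ, if ek k ∈ segment ℝ (ek P) (ek Q) then
                capDiam Ω ((‖ek k‖)⁻¹ • ek k) (1 / (R * ‖ek k‖)) else 0) ≤
            C * (r * (NJ : ℝ) / (h * d ^ 2)) ^ ((1 : ℝ) / 3))) := by
  obtain ⟨K, hK⟩ := hcurv
  obtain ⟨ε', hε', hball'⟩ := Metric.isOpen_iff.1 hopen 0 h0
  obtain ⟨ε, hε, hball⟩ : ∃ ε > 0, Metric.closedBall (0 : E2) ε ⊆ Ω :=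
    ⟨ε' / 2, by positivity, (Metric.closedBall_subset_ball (by linarith)).trans hball'⟩
  obtain ⟨M, hM0, hM⟩ := hbdd.closure.exists_pos_norm_le
  set C1 : ℝ := 16 * M / ε + 64 * M / ε ^ 5 with hC1
  have hC10 : 0 < C1 := by positivity
  refine ⟨6 * C1 + |K| * Real.sqrt M, ?_⟩
  intro r R h hr hrR hRh hhR P Q hPQ hseg NJ hNJ hN10 d hd
  have hr0 : 0 < r := by linarith
  have hR0 : 0 < R := by linarith
  have hh0 : 0 < h := by
    have : 0 < Real.sqrt R := Real.sqrt_pos.2 hR0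
    linarith
  obtain ⟨g, n, hg, hQ, hk⟩ := exists_step P Q hPQ
  have hinj : Function.Injective (fun j : ℕ => P + j • g) := by
    intro a b hab
    have h1 : a • g = b • g := add_left_cancel hab
    obtain ⟨i, hi⟩ := Function.ne_iff.1 hg
    have h2 := congrFun h1 i
    simp only [nsmul_eq_mul, Pi.mul_apply, Pi.natCast_apply] at h2
    exact_mod_cast mul_right_cancel₀ hi h2
  have hset : {k : Fin 2 → ℤ | ek k ∈ segment ℝ (ek P) (ek Q)} =
      ((Finset.range (n + 1)).image (fun j : ℕ => P + j • g) : Finset (Fin 2 → ℤ)) := by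
    ext k
    simp only [mem_ofPred_eq, hk, Finset.coe_image, mem_image, Finset.mem_coe]
    exact ⟨fun ⟨j, hj, e⟩ => ⟨j, hj, e.symm⟩, fun ⟨j, hj, e⟩ => ⟨j, hj, e.symm⟩⟩
  have hNn : NJ = n + 1 := by
    rw [hNJ, hset, Nat.card_coe_set_eq, Set.ncard_coe_finset,
      Finset.card_image_of_injective _ hinj, Finset.card_range]
  have hstep : ∀ j : ℕ, ek (P + j • g) = ek P + (j : ℝ) • ek g := by
    intro j
    ext i
    simp [ek_apply]
  have hQ' : ek Q = ek P + (n : ℝ) • ek g := by rw [hQ, hstep]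
  have hn9 : (9 : ℝ) ≤ n := by exact_mod_cast (by omega : 9 ≤ n)
  have hNR : (NJ : ℝ) = n + 1 := by rw [hNn]; push_cast; ring
  have hdv : d = ‖ek g‖ := by
    rw [hd, hNR, hQ', dist_self_add_right, norm_smul, Real.norm_eq_abs, Nat.abs_cast,
      add_sub_cancel_right, mul_div_cancel_left₀ _ (by linarith)]
  have hv1 : 1 ≤ ‖ek g‖ := by
    obtain ⟨i, hi⟩ := Function.ne_iff.1 hg
    have h1 : ‖ek g i‖ ≤ ‖ek g‖ := PiLp.norm_apply_le (ek g) i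
    rw [ek_apply, Real.norm_eq_abs] at h1
    have h2 : (1 : ℝ) ≤ |(g i : ℝ)| := by exact_mod_cast Int.one_le_abs hi
    linarith
  have hd1 : 1 ≤ d := by rw [hdv]; exact hv1
  have hd0 : 0 < d := by linarith
  have hNR0 : (0 : ℝ) < NJ := by rw [hNR]; linarith
  set f : ℝ → ℝ := fun t => suppFn Ω (ek P + t • ek g) with hf
  have hfc : ConvexOn ℝ univ f := convexOn_suppFn_line hbdd h0 _ _
  have hann : ∀ t : ℝ, -NJ ≤ t → t ≤ 2 * NJ → r ≤ f t ∧ f t ≤ r + 1 / h := by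
    intro t ht1 ht2
    apply hseg
    rw [segment_eq_image']
    rw [hNR] at ht1 ht2
    refine ⟨(t / n + 4) / 9, ⟨?_, ?_⟩, ?_⟩
    · have : -4 ≤ t / n := by rw [le_div_iff₀ (by linarith)]; linarith
      linarith
    · have : t / n ≤ 5 := by rw [div_le_iff₀ (by linarith)]; linarith
      linarith
    · simp only [hQ']
      match_scalars <;> field_simp <;> ring
  -- The claim common to both regimes.
  set A : ℝ := (R * r / (h ^ 2 * d ^ 2)) ^ ((1 : ℝ) / 4) with hA
  have hA0 : 0 < A := by positivity
  have hA2 : A ^ 2 = Real.sqrt (R * r) / (h * d) := by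
    rw [hA, ← Real.rpow_natCast, ← Real.rpow_mul (by positivity),
      show R * r / (h ^ 2 * d ^ 2) = R * r / (h * d) ^ 2 by rw [mul_pow],
      show (1 : ℝ) / 4 * ((2 : ℕ) : ℝ) = 1 / 2 by norm_num, ← Real.sqrt_eq_rpow,
      Real.sqrt_div (by positivity), Real.sqrt_sq (by positivity)]
  have hsum : (∑' k : Fin 2 → ℤ, if ek k ∈ segment ℝ (ek P) (ek Q) then
      capDiam Ω ((‖ek k‖)⁻¹ • ek k) (1 / (R * ‖ek k‖)) else 0) =
      ∑ j ∈ Finset.range NJ, capDiam Ω (‖ek P + (j : ℝ) • ek g‖⁻¹ • (ek P + (j : ℝ) • ek g))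
        (1 / (R * ‖ek P + (j : ℝ) • ek g‖)) := by
    rw [tsum_eq_sum (s := (Finset.range NJ).image (fun j : ℕ => P + j • g))]
    · rw [Finset.sum_image (fun a _ b _ hab => hinj hab)]
      refine Finset.sum_congr rfl fun j hj => ?_
      rw [if_pos ((hk _).2 ⟨j, by rwa [← hNn], rfl⟩), hstep]
    · intro k hk'
      rw [if_neg]
      intro hmem
      obtain ⟨j, hj, rfl⟩ := (hk k).1 hmem
      exact hk' (Finset.mem_image_of_mem _ (by rwa [hNn]))
  have hmain : Real.sqrt (R * r) * (∑' k : Fin 2 → ℤ, if ek k ∈ segment ℝ (ek P) (ek Q) then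
      capDiam Ω ((‖ek k‖)⁻¹ • ek k) (1 / (R * ‖ek k‖)) else 0) ≤
      (6 * C1 + |K| * Real.sqrt M) * A := by
    rw [hsum]
    have hKM : 0 ≤ |K| * Real.sqrt M := by positivity
    rcases le_total (NJ : ℝ) A with hNA | hNA
    · -- Few points: the curvature hypothesis bounds each cap by a multiple of `(R r)^{-1/2}`.
      have hcap : ∀ j ∈ Finset.range NJ,
          capDiam Ω (‖ek P + (j : ℝ) • ek g‖⁻¹ • (ek P + (j : ℝ) • ek g))
            (1 / (R * ‖ek P + (j : ℝ) • ek g‖)) ≤ |K| * Real.sqrt M / Real.sqrt (R * r) := by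
        intro j hj
        have hj' : (j : ℝ) < NJ := by exact_mod_cast Finset.mem_range.1 hj
        have hj0 : (0 : ℝ) ≤ j := by positivity
        have h1 : r ≤ M * ‖ek P + (j : ℝ) • ek g‖ :=
          (hann j (by linarith) (by linarith)).1.trans
            (suppFn_le_mul_norm h0 (fun x hx => hM x (subset_closure hx)) _)
        set ℓ : E2 := ek P + (j : ℝ) • ek g
        have hℓ0 : 0 < ‖ℓ‖ := by
          by_contra hcon
          nlinarith
        refine (hK _ ?_ _ (by positivity)).trans ?_
        · rw [norm_smul, norm_inv, norm_norm, inv_mul_cancel₀ hℓ0.ne']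
        · rw [mul_div_assoc, ← Real.sqrt_div hM0.le]
          have h2 : 1 / (R * ‖ℓ‖) ≤ M / (R * r) := by
            rw [div_le_div_iff₀ (by positivity) (by positivity)]
            nlinarith
          calc K * Real.sqrt (1 / (R * ‖ℓ‖)) ≤ |K| * Real.sqrt (1 / (R * ‖ℓ‖)) := by
                gcongr; exact le_abs_self K
            _ ≤ _ := by gcongr
      have h1 := Finset.sum_le_card_nsmul _ _ _ hcap
      rw [Finset.card_range, nsmul_eq_mul] at h1
      have hS0 : 0 < Real.sqrt (R * r) := Real.sqrt_pos.2 (by positivity)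
      calc _ ≤ Real.sqrt (R * r) * (NJ * (|K| * Real.sqrt M / Real.sqrt (R * r))) := by gcongr
        _ = |K| * Real.sqrt M * NJ := by field_simp
        _ ≤ |K| * Real.sqrt M * A := by gcongr
        _ ≤ _ := by gcongr; linarith
    · -- Many points: the second differences telescope.
      obtain ⟨m, hm1, hmN, hbal⟩ := sqrt_mul_balance hr0 hrR hh0 hhR hd1
        (show 0 < NJ by omega) hA0 hA2
      have hm0 : (0 : ℝ) < m := by exact_mod_cast hm1
      have h1 := Finset.sum_le_sum fun j (hj : j ∈ Finset.range NJ) =>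
        capDiam_le hbdd h0 hε hball hM0 hM hr hrR hRh hhR hv1 (f := f) (fun _ => rfl) hN10 hann
          (Finset.mem_range.1 hj) hm1 hmN
      rw [← Finset.mul_sum, ← Finset.sum_div, Finset.sum_add_distrib, ← Finset.sum_div,
        Finset.sum_const, Finset.card_range, nsmul_eq_mul, ← hdv, ← hC1] at h1
      have h2 := sum_second_diff_le hfc hm1 hmN hann
      have h3 : (∑ j ∈ Finset.range NJ, (f (j + m) + f (j - m) - 2 * f j)) / m +
          NJ * (2 / (m * R)) ≤ 2 * (1 / h) * m / NJ + 2 * NJ / (m * R) := by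
        calc _ ≤ 2 * (1 / h) * m ^ 2 / NJ / m + NJ * (2 / (m * R)) := by gcongr
          _ = _ := by field_simp
      have h4 : A ^ 2 / NJ ≤ A := by
        rw [div_le_iff₀ hNR0]; nlinarith
      calc _ ≤ Real.sqrt (R * r) *
            (C1 * ((2 * (1 / h) * m / NJ + 2 * NJ / (m * R)) / d)) := by
            gcongr
            refine h1.trans ?_
            gcongr
        _ = C1 * (Real.sqrt (R * r) *
            ((2 * (1 / h) * m / NJ + 2 * NJ / (m * R)) / d)) := by ring
        _ ≤ C1 * (4 * A + 2 * (A ^ 2 / NJ)) := by gcongr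
        _ ≤ C1 * (4 * A + 2 * A) := by gcongr
        _ = 6 * C1 * A := by ring
        _ ≤ _ := by gcongr; linarith
  refine ⟨fun _ => hmain, fun hT => hmain.trans ?_⟩
  gcongr
  exact bound_le_of_threshold hr0 hR0 hh0 hd0 hNR0.le hT

end
end

section
/- Suppose F₁, …, F_J are points of ℤ² which are the vertices of a convex polygonal curve: for i = 1,…,J−1 write the vector from F_i to F_{i+1} as L_i (cos β_i, sin β_i) with L_i > 0, and assume β_{i+1} > β_i for all i and β_{J−1} − β₁ ≤ 2π. Set L = Σ_{i=1}^{J−1} L_i. Then J ≤ 2 + (β_{J−1} − β₁)^{1/3} L^{2/3}. -/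
/-!
Consecutive edge vectors `v_i`, `v_{i+1}` are nonzero lattice vectors, and with
`δ_i = β_{i+1} - β_i > 0` they satisfy `1 ≤ L_i L_{i+1} δ_i` (`one_le_mul_mul_angle`): if `δ_i < π`
their cross product `L_i L_{i+1} sin δ_i` is a positive integer and `sin δ_i ≤ δ_i`, while if
`δ_i ≥ π` it suffices that lattice vectors have length at least `1`.

With `m = J - 2` pairs of consecutive edges, Hölder's inequality then gives
`m ≤ ∑ (L_i L_{i+1} δ_i)^{1/3} ≤ (∑ L_i)^{1/3} (∑ L_{i+1})^{1/3} (∑ δ_i)^{1/3} ≤ L^{2/3} Θ^{1/3}`,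
where `Θ = ∑ δ_i = β_{J-1} - β_1`. Hölder is carried out by applying the three-term AM-GM inequality
(`three_le_add_mul`) to the normalised quantities `L_i / L`, `L_{i+1} / L`, `δ_i / Θ`.
-/

open Set

noncomputable section

/-- The embedding of an integer point into the real plane. -/
def pt (p : ℤ × ℤ) : ℝ × ℝ := ((p.1 : ℝ), (p.2 : ℝ))

/-- A nonzero integer vector has length at least `1`. -/
lemma one_le_length {a b : ℤ} {l t : ℝ} (hl : 0 < l)
    (ha : (a : ℝ) = l * Real.cos t) (hb : (b : ℝ) = l * Real.sin t) : 1 ≤ l := by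
  have h : ((a ^ 2 + b ^ 2 : ℤ) : ℝ) = l ^ 2 := by
    push_cast
    rw [ha, hb]
    linear_combination l ^ 2 * Real.sin_sq_add_cos_sq t
  have h0 : 0 < a ^ 2 + b ^ 2 := by
    have : (0 : ℝ) < ((a ^ 2 + b ^ 2 : ℤ) : ℝ) := by rw [h]; positivity
    exact_mod_cast this
  have h1 : (1 : ℝ) ≤ ((a ^ 2 + b ^ 2 : ℤ) : ℝ) := by exact_mod_cast h0
  rw [h] at h1
  nlinarith

lemma one_le_mul_mul_angle {a b c d : ℤ} {l l' t t' : ℝ} (hl : 0 < l) (hl' : 0 < l')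
    (ha : (a : ℝ) = l * Real.cos t) (hb : (b : ℝ) = l * Real.sin t)
    (hc : (c : ℝ) = l' * Real.cos t') (hd : (d : ℝ) = l' * Real.sin t') (ht : t < t') :
    1 ≤ l * l' * (t' - t) := by
  have hll : 0 < l * l' := mul_pos hl hl'
  rcases lt_or_ge (t' - t) Real.pi with h | h
  · have hcross : ((a * d - b * c : ℤ) : ℝ) = l * l' * Real.sin (t' - t) := by
      push_cast
      rw [ha, hb, hc, hd, Real.sin_sub]
      ring
    have hsin : 0 < Real.sin (t' - t) := Real.sin_pos_of_pos_of_lt_pi (by linarith) h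
    have h0 : 0 < a * d - b * c := by
      have : (0 : ℝ) < ((a * d - b * c : ℤ) : ℝ) := by rw [hcross]; positivity
      exact_mod_cast this
    have h1 : (1 : ℝ) ≤ ((a * d - b * c : ℤ) : ℝ) := by exact_mod_cast h0
    rw [hcross] at h1
    exact h1.trans (mul_le_mul_of_nonneg_left (Real.sin_le (by linarith)) hll.le)
  · have h1 := one_le_length hl ha hb
    have h2 := one_le_length hl' hc hd
    have h3 : 1 ≤ t' - t := by linarith [Real.pi_gt_three]
    exact one_le_mul_of_one_le_of_one_le (one_le_mul_of_one_le_of_one_le h1 h2) h3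

/-- AM-GM for three numbers, normalised by the cube root `s` of a bound on `(x y z)⁻¹`. -/
lemma three_le_add_mul {x y z s : ℝ} (hx : 0 < x) (hy : 0 < y) (hz : 0 < z) (hs : 0 < s)
    (h : 1 ≤ x * y * z * s ^ 3) : 3 ≤ (x + y + z) * s := by
  have amgm : 27 * (x * y * z) ≤ (x + y + z) ^ 3 := by
    nlinarith [mul_nonneg hx.le (sq_nonneg (y - z)), mul_nonneg hy.le (sq_nonneg (x - z)),
      mul_nonneg hz.le (sq_nonneg (x - y)), mul_nonneg hx.le (sq_nonneg (x - y)),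
      mul_nonneg hx.le (sq_nonneg (x - z)), mul_nonneg hy.le (sq_nonneg (x - y)),
      mul_nonneg hy.le (sq_nonneg (y - z)), mul_nonneg hz.le (sq_nonneg (x - z)),
      mul_nonneg hz.le (sq_nonneg (y - z))]
  have h3 : (3 : ℝ) ^ 3 ≤ ((x + y + z) * s) ^ 3 := by
    have := mul_le_mul_of_nonneg_right amgm (pow_pos hs 3).le
    rw [mul_pow]
    linarith
  exact le_of_pow_le_pow_left₀ (by norm_num) (by positivity) h3

/-- Lemma 7.1: if `F₁, …, F_J ∈ ℤ²` are the vertices of a convex polygonal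
curve, i.e. the interiors of the successive segments are mutually disjoint and
`F_{i+1} − F_i = L_i (cos β_i, sin β_i)` with `L_i > 0` and `β_{i+1} > β_i`, and if
`β_{J−1} − β₁ ≤ 2π` and `L = Σ_{i=1}^{J−1} L_i`, then `J ≤ 2 + (β_{J−1} − β₁)^{1/3} L^{2/3}`. -/
theorem statement12 (J : ℕ) (F : ℕ → ℤ × ℤ) (L β : ℕ → ℝ) (Ltot : ℝ)
    (hdisj : ∀ i j : ℕ, 1 ≤ i → i < j → j ≤ J - 1 →
      openSegment ℝ (pt (F i)) (pt (F (i + 1))) ∩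
        openSegment ℝ (pt (F j)) (pt (F (j + 1))) = ∅)
    (hvec : ∀ i : ℕ, 1 ≤ i → i ≤ J - 1 →
      ((F (i + 1)).1 - (F i).1 : ℝ) = L i * Real.cos (β i) ∧
      ((F (i + 1)).2 - (F i).2 : ℝ) = L i * Real.sin (β i))
    (hL : ∀ i : ℕ, 1 ≤ i → i ≤ J - 1 → 0 < L i)
    (hβ : ∀ i : ℕ, 1 ≤ i → i + 1 ≤ J - 1 → β i < β (i + 1))
    (hβtot : β (J - 1) - β 1 ≤ 2 * Real.pi)
    (hLtot : Ltot = ∑ i ∈ Finset.Icc 1 (J - 1), L i) :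
    (J : ℝ) ≤ 2 + (β (J - 1) - β 1) ^ ((1 : ℝ) / 3) * Ltot ^ ((2 : ℝ) / 3) := by
  rcases lt_or_ge J 3 with hJ | hJ
  · -- For `J ≤ 1` the index `J - 1 = 0` makes `β (J - 1)` meaningless, but then `Ltot = 0`.
    interval_cases J
    · simp [hLtot]
    · simp [hLtot]
    · simp
  obtain ⟨m, rfl⟩ : ∃ m, J = m + 2 := ⟨J - 2, by omega⟩
  have hJ1 : m + 2 - 1 = m + 1 := rfl
  rw [hJ1] at *
  have hm : 0 < m := by omega
  have hδ : ∀ i ∈ Finset.range m, 0 < β (i + 1 + 1) - β (i + 1) := fun i hi =>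
    sub_pos.2 (hβ (i + 1) (by omega) (by have := Finset.mem_range.1 hi; omega))
  have hLpos : ∀ i ∈ Finset.range (m + 1), 0 < L (i + 1) := fun i hi =>
    hL (i + 1) (by omega) (by have := Finset.mem_range.1 hi; omega)
  have hΘ : ∑ i ∈ Finset.range m, (β (i + 1 + 1) - β (i + 1)) = β (m + 1) - β 1 :=
    Finset.sum_range_sub (fun i => β (i + 1)) m
  have hΘpos : 0 < β (m + 1) - β 1 := by
    rw [← hΘ]
    exact Finset.sum_pos hδ ⟨0, by simpa using hm⟩
  have hLsum : Ltot = ∑ i ∈ Finset.range (m + 1), L (i + 1) := by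
    rw [hLtot, Finset.range_eq_Ico, Finset.sum_Ico_add' L 0 (m + 1) 1]
    rfl
  have hLtpos : 0 < Ltot := by
    rw [hLsum]
    exact Finset.sum_pos hLpos ⟨0, by simp⟩
  have hsum1 : ∑ i ∈ Finset.range m, L (i + 1) ≤ Ltot := by
    rw [hLsum, Finset.sum_range_succ]
    linarith [hLpos m (by simp)]
  have hsum2 : ∑ i ∈ Finset.range m, L (i + 1 + 1) ≤ Ltot := by
    rw [hLsum, Finset.sum_range_succ']
    linarith [hLpos 0 (by simp)]
  set Θ := β (m + 1) - β 1 with hΘdef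
  set s := Θ ^ ((1 : ℝ) / 3) * Ltot ^ ((2 : ℝ) / 3) with hs
  have hspos : 0 < s := by positivity
  have hs3 : s ^ 3 = Θ * Ltot ^ 2 := by
    rw [hs, mul_pow, ← Real.rpow_natCast, ← Real.rpow_natCast, ← Real.rpow_mul hΘpos.le,
      ← Real.rpow_mul hLtpos.le]
    norm_num
  have hterm : ∀ i ∈ Finset.range m,
      3 ≤ (L (i + 1) / Ltot + L (i + 1 + 1) / Ltot + (β (i + 1 + 1) - β (i + 1)) / Θ) * s := by
    intro i hi
    have him := Finset.mem_range.1 hi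
    have hl1 := hL (i + 1) (by omega) (by omega)
    have hl2 := hL (i + 1 + 1) (by omega) (by omega)
    have hd := hδ i hi
    obtain ⟨ha, hb⟩ := hvec (i + 1) (by omega) (by omega)
    obtain ⟨hc, he⟩ := hvec (i + 1 + 1) (by omega) (by omega)
    have key := one_le_mul_mul_angle hl1 hl2 (by exact_mod_cast ha) (by exact_mod_cast hb)
      (by exact_mod_cast hc) (by exact_mod_cast he) (sub_pos.1 hd)
    refine three_le_add_mul (by positivity) (by positivity) (by positivity) hspos ?_
    rw [hs3]
    refine key.trans_eq ?_
    field_simp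
  have htot := Finset.sum_le_sum hterm
  rw [← Finset.sum_mul, Finset.sum_add_distrib, Finset.sum_add_distrib, ← Finset.sum_div,
    ← Finset.sum_div, ← Finset.sum_div, hΘ, div_self hΘpos.ne', Finset.sum_const,
    Finset.card_range, nsmul_eq_mul] at htot
  have h1 := (div_le_one hLtpos).2 hsum1
  have h2 := (div_le_one hLtpos).2 hsum2
  have h3 : (m : ℝ) * 3 ≤ 3 * s :=
    htot.trans (mul_le_mul_of_nonneg_right (by linarith) hspos.le)
  push_cast
  linarith

end
end
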